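/- arXiv:2105.06563 — 2 statements merged into one kernel-verified Lean document; each statement's English description precedes it below -/
import Mathlib

section
/- Fix E > 0. For a ∈ (0, 1) define the 2×2 real matrices T_a = [[cos(√E a), sin(√E a)/√E], [−√E sin(√E a), cos(√E a)]], B(y) = [[1, 0], [y, 1]], and set y₁(a) = a^{−3/2} − a^{−1}, y₂(a) = a^{−1/2} − a^{−1}, M⁽¹⁾_a = B(y₁(a)) T_a, M⁽²⁾_a = B(y₂(a)) T_a. Then the matrix product M_a(E) = M⁽²⁾_a (M⁽¹⁾_a)² M⁽²⁾_a M⁽¹⁾_a (M⁽²⁾_a)² M⁽¹⁾_a converges entrywise, as a → 0⁺, to the matrix M(E) = [[1 − (5/3)E, 1], [−(5/3)E, 1]]. -/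
open Filter Matrix

/-- The free transfer matrix over an interval of length `a` at energy `E`. -/
noncomputable def freeT (E a : ℝ) : Matrix (Fin 2) (Fin 2) ℝ :=
  Matrix.of
    ![![Real.cos (Real.sqrt E * a), Real.sin (Real.sqrt E * a) / Real.sqrt E],
      ![-(Real.sqrt E * Real.sin (Real.sqrt E * a)), Real.cos (Real.sqrt E * a)]]

/-- The transfer matrix across a delta distribution of strength `y`. -/
def deltaB (y : ℝ) : Matrix (Fin 2) (Fin 2) ℝ :=
  Matrix.of ![![1, 0], ![y, 1]]

noncomputable def y₁ (a : ℝ) : ℝ := a ^ (-(3 : ℝ) / 2) - a⁻¹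
noncomputable def y₂ (a : ℝ) : ℝ := a ^ (-(1 : ℝ) / 2) - a⁻¹

noncomputable def Mone (E a : ℝ) : Matrix (Fin 2) (Fin 2) ℝ := deltaB (y₁ a) * freeT E a
noncomputable def Mtwo (E a : ℝ) : Matrix (Fin 2) (Fin 2) ℝ := deltaB (y₂ a) * freeT E a

/-- The transfer matrix from `0` to `8a`:
`M_a(E) = M⁽²⁾(M⁽¹⁾)² M⁽²⁾ M⁽¹⁾ (M⁽²⁾)² M⁽¹⁾`. -/
noncomputable def Mfull (E a : ℝ) : Matrix (Fin 2) (Fin 2) ℝ :=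
  Mtwo E a * (Mone E a) ^ 2 * Mtwo E a * Mone E a * (Mtwo E a) ^ 2 * Mone E a

/-!
Compare the chain at energy `E` with the same chain at energy `0`, where the free matrix `T⁰` is a
shear. If `P` is the zero-energy matrix of the chain up to some cell, then that cell multiplies the
relative transfer matrix by `(T⁰P)⁻¹ (T P)`, which to leading order differs from `1` by `E` times
the integrals over the cell of products of two zero-energy solutions. With `t = √a`, at zero energy
the first four cells together are exactly the shear of length `t² (1 + t)²`, and the last four the
shear of length `(1 + t)²`. In between, the solution starting from `(1, 0)` climbs linearly to
`1 / t` over the second cell, stays there over the third and descends over the fourth, so that its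
square has integral tending to `1/3 + 1 + 1/3 = 5/3`, whereas all other integrals tend to `0`.
So the first four cells tend to `B(-(5/3)E)` and the last four to the unit shear.
-/

open scoped Topology

/-- The free transfer matrix over an interval of length `a` at energy `0`. It is defined separately
because `freeT 0 a` is the identity, through a division by `√0`. -/
def zeroEnergyT (a : ℝ) : Matrix (Fin 2) (Fin 2) ℝ := !![1, a; 0, 1]

/-- The transfer matrix of a chain of delta distributions with the given strengths, each preceded by
the free matrix `T`. The list is ordered like the matrix product: its head is crossed last. -/
def chainT (T : Matrix (Fin 2) (Fin 2) ℝ) : List ℝ → Matrix (Fin 2) (Fin 2) ℝ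
  | [] => 1
  | y :: l => deltaB y * T * chainT T l

/-- The transfer matrix at energy `E` of a chain of spacing `a` relative to the one at energy `0`
(the interaction picture). -/
noncomputable def relativeT (E a : ℝ) (l : List ℝ) : Matrix (Fin 2) (Fin 2) ℝ :=
  (chainT (zeroEnergyT a) l)⁻¹ * chainT (freeT E a) l

/-- The overlap of the `i`-th and `j`-th zero-energy solutions over a cell at whose left and right
ends they have the values `x` and `y`. For `i = j`, `s = 1` and `g = 1 / 3` it is the mean over the
cell of the square of the linear interpolant. -/
def cellOverlap (s g : ℝ) (x y : Fin 2 → ℝ) (i j : Fin 2) : ℝ :=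
  s * (y i * x j) + g * ((y i - x i) * (y j - x j))

/-- The factor contributed by one cell to `relativeT`, where `x` and `y` are the values of the
zero-energy solutions at its ends, scaled by the square root of its length. At phase `θ` across the
cell, `c = cos θ`, `s = sin θ / θ` and `g = (sin θ - θ cos θ) / θ³`. -/
def cellFactor (E c s g : ℝ) (x y : Fin 2 → ℝ) : Matrix (Fin 2) (Fin 2) ℝ :=
  !![c + E * cellOverlap s g x y 1 0, E * cellOverlap s g x y 1 1;
    -(E * cellOverlap s g x y 0 0), c - E * cellOverlap s g x y 0 1]

/-- The chain `l a` of spacing `a` has amplitude `ξ`: at its end, the zero-energy solutions starting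
from `(1, 0)` and `(0, 1)`, both scaled by `√a`, tend to `ξ` and `0` as `a → 0⁺`. -/
def HasAmplitude (l : ℝ → List ℝ) (ξ : ℝ) : Prop :=
  Tendsto (fun a => √a • chainT (zeroEnergyT a) (l a) 0) (𝓝[>] 0) (𝓝 ![ξ, 0])

lemma det_deltaB (y : ℝ) : (deltaB y).det = 1 := by
  simp [deltaB, det_fin_two]

lemma deltaB_mul_deltaB (y z : ℝ) : deltaB y * deltaB z = deltaB (y + z) := by
  simp [deltaB]

lemma deltaB_zero : deltaB 0 = 1 := by
  simp [deltaB, one_fin_two]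

lemma deltaB_mul_apply_zero (y : ℝ) (A : Matrix (Fin 2) (Fin 2) ℝ) : (deltaB y * A) 0 = A 0 := by
  ext j
  simp [deltaB, mul_apply]

lemma det_zeroEnergyT (a : ℝ) : (zeroEnergyT a).det = 1 := by
  simp [zeroEnergyT]

lemma continuous_zeroEnergyT : Continuous zeroEnergyT := by
  unfold zeroEnergyT
  fun_prop

lemma det_chainT {T : Matrix (Fin 2) (Fin 2) ℝ} (hT : T.det = 1) (l : List ℝ) :
    (chainT T l).det = 1 := by
  induction l with
  | nil => exact det_one
  | cons y l ih => rw [chainT, det_mul, det_mul, det_deltaB, hT, ih, one_mul, one_mul]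

lemma chainT_cons_apply_zero (T : Matrix (Fin 2) (Fin 2) ℝ) (y : ℝ) (l : List ℝ) :
    chainT T (y :: l) 0 = (T * chainT T l) 0 := by
  rw [chainT, mul_assoc, deltaB_mul_apply_zero]

lemma relativeT_nil (E a : ℝ) : relativeT E a [] = 1 := by
  simp [relativeT, chainT]

lemma chainT_mul_relativeT (E a : ℝ) (l : List ℝ) :
    chainT (zeroEnergyT a) l * relativeT E a l = chainT (freeT E a) l :=
  mul_nonsing_inv_cancel_left _ _ (by simp [det_chainT, det_zeroEnergyT])

lemma relativeT_cons (E a y : ℝ) (l : List ℝ) :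
    relativeT E a (y :: l) =
      (zeroEnergyT a * chainT (zeroEnergyT a) l)⁻¹ * (freeT E a * chainT (zeroEnergyT a) l) *
        relativeT E a l := by
  have hB : IsUnit (deltaB y).det := by simp [det_deltaB]
  calc relativeT E a (y :: l)
      = (zeroEnergyT a * chainT (zeroEnergyT a) l)⁻¹ *
          ((deltaB y)⁻¹ * (deltaB y * (freeT E a * chainT (freeT E a) l))) := by
        simp only [relativeT, chainT, mul_assoc, Matrix.mul_inv_rev]
    _ = (zeroEnergyT a * chainT (zeroEnergyT a) l)⁻¹ *
          (freeT E a * (chainT (zeroEnergyT a) l * relativeT E a l)) := by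
        rw [nonsing_inv_mul_cancel_left _ _ hB, chainT_mul_relativeT]
    _ = _ := by simp only [mul_assoc]

lemma freeT_eq_sinc {E : ℝ} (hE : 0 < E) (a : ℝ) :
    freeT E a = !![Real.cos (√E * a), a * Real.sinc (√E * a);
      -(E * (a * Real.sinc (√E * a))), Real.cos (√E * a)] := by
  have hk : √E ≠ 0 := (Real.sqrt_pos.2 hE).ne'
  have hsin : Real.sin (√E * a) = √E * (a * Real.sinc (√E * a)) := by
    rcases eq_or_ne a 0 with rfl | ha
    · simp
    · rw [Real.sinc_of_ne_zero (mul_ne_zero hk ha)]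
      field_simp
  rw [freeT, hsin, mul_div_cancel_left₀ _ hk, ← mul_assoc √E, Real.mul_self_sqrt hE.le]

lemma tendsto_sin_sub_mul_cos_div_cube :
    Tendsto (fun x : ℝ => (Real.sin x - x * Real.cos x) / x ^ 3) (𝓝[≠] 0) (𝓝 (1 / 3)) := by
  refine HasDerivAt.lhopital_zero_nhdsNE (f' := fun x => x * Real.sin x)
    (g' := fun x => 3 * x ^ 2) (.of_forall fun x => ?_) (.of_forall fun x => ?_) ?_ ?_ ?_ ?_
  · exact ((Real.hasDerivAt_sin x).fun_sub
      ((hasDerivAt_id' x).fun_mul (Real.hasDerivAt_cos x))).congr_deriv (by ring)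
  · simpa using hasDerivAt_pow 3 x
  · filter_upwards [self_mem_nhdsWithin] with x hx
    exact mul_ne_zero three_ne_zero (pow_ne_zero 2 hx)
  · exact ((by fun_prop : Continuous fun x : ℝ => Real.sin x - x * Real.cos x).tendsto' 0 0
      (by simp)).mono_left nhdsWithin_le_nhds
  · exact ((by fun_prop : Continuous fun x : ℝ => x ^ 3).tendsto' 0 0
      (by simp)).mono_left nhdsWithin_le_nhds
  · have hsinc : Tendsto (fun x => Real.sinc x / 3) (𝓝[≠] 0) (𝓝 (1 / 3)) :=
      ((Real.continuous_sinc.div_const 3).tendsto' 0 _ (by simp)).mono_left nhdsWithin_le_nhds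
    refine hsinc.congr' ?_
    filter_upwards [self_mem_nhdsWithin] with x (hx : x ≠ 0)
    rw [Real.sinc_of_ne_zero hx]
    field_simp

lemma cellOverlap_sqrt_smul {a : ℝ} (ha : 0 ≤ a) (s g : ℝ) (x y : Fin 2 → ℝ) (i j : Fin 2) :
    cellOverlap s g (√a • x) (√a • y) i j = a * cellOverlap s g x y i j := by
  simp only [cellOverlap, Pi.smul_apply, smul_eq_mul]
  linear_combination (s * (y i * x j) + g * ((y i - x i) * (y j - x j))) * Real.mul_self_sqrt ha

lemma inv_mul_mul_eq_cellFactor {E a c s g : ℝ} (ha : 0 ≤ a) (hg : s - c = E * a ^ 2 * g)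
    {P : Matrix (Fin 2) (Fin 2) ℝ} (hP : P.det = 1) :
    (zeroEnergyT a * P)⁻¹ * (!![c, a * s; -(E * (a * s)), c] * P) =
      cellFactor E c s g (√a • P 0) (√a • (zeroEnergyT a * P) 0) := by
  have hdet : (zeroEnergyT a * P).det = 1 := by rw [det_mul, det_zeroEnergyT, hP, one_mul]
  rw [inv_def, hdet, Ring.inverse_one, one_smul]
  simp only [cellFactor, cellOverlap_sqrt_smul ha]
  obtain ⟨p, q, r, w, rfl⟩ : ∃ p q r w, P = !![p, q; r, w] := ⟨_, _, _, _, eta_fin_two P⟩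
  rw [det_fin_two_of] at hP
  simp only [zeroEnergyT, cellOverlap, mul_fin_two, adjugate_fin_two_of, of_apply, cons_val,
    EmbeddingLike.apply_eq_iff_eq, vecCons_inj, and_true]
  refine ⟨⟨?_, ?_⟩, ?_, ?_⟩
  · linear_combination c * hP + a * r * w * hg
  · linear_combination a * w ^ 2 * hg
  · linear_combination - a * r ^ 2 * hg
  · linear_combination c * hP - a * r * w * hg

lemma inv_mul_freeT_mul_eq_cellFactor {E a : ℝ} (hE : 0 < E) (ha : 0 < a)
    {P : Matrix (Fin 2) (Fin 2) ℝ} (hP : P.det = 1) :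
    (zeroEnergyT a * P)⁻¹ * (freeT E a * P) =
      cellFactor E (Real.cos (√E * a)) (Real.sinc (√E * a))
        ((Real.sin (√E * a) - √E * a * Real.cos (√E * a)) / (√E * a) ^ 3)
        (√a • P 0) (√a • (zeroEnergyT a * P) 0) := by
  have hk : 0 < √E := Real.sqrt_pos.2 hE
  rw [freeT_eq_sinc hE]
  refine inv_mul_mul_eq_cellFactor ha.le ?_ hP
  rw [Real.sinc_of_ne_zero (mul_pos hk ha).ne']
  nth_rw 4 [← Real.sq_sqrt hE.le]
  field_simp

lemma continuous_cellFactor (E : ℝ) :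
    Continuous fun p : ℝ × ℝ × ℝ × (Fin 2 → ℝ) × (Fin 2 → ℝ) =>
      cellFactor E p.1 p.2.1 p.2.2.1 p.2.2.2.1 p.2.2.2.2 := by
  unfold cellFactor cellOverlap
  fun_prop

lemma cellFactor_limit (E ξ η : ℝ) :
    cellFactor E 1 1 (1 / 3) ![ξ, 0] ![η, 0] = deltaB (-((ξ ^ 2 + ξ * η + η ^ 2) / 3 * E)) := by
  simp only [cellFactor, cellOverlap, deltaB, cons_val, EmbeddingLike.apply_eq_iff_eq, vecCons_inj,
    and_true]
  refine ⟨⟨?_, ?_⟩, ?_, ?_⟩ <;> ring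

lemma tendsto_relativeT_cons {E : ℝ} (hE : 0 < E) {y : ℝ → ℝ} {l : ℝ → List ℝ} {ξ η m : ℝ}
    (hl : HasAmplitude l ξ) (hyl : HasAmplitude (fun a => y a :: l a) η)
    (h : Tendsto (fun a => relativeT E a (l a)) (𝓝[>] 0) (𝓝 (deltaB (-(m * E))))) :
    Tendsto (fun a => relativeT E a (y a :: l a)) (𝓝[>] 0)
      (𝓝 (deltaB (-(((ξ ^ 2 + ξ * η + η ^ 2) / 3 + m) * E)))) := by
  have hk : 0 < √E := Real.sqrt_pos.2 hE
  have hka : Tendsto (fun a => √E * a) (𝓝[>] 0) (𝓝 0) :=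
    ((continuous_const_mul √E).tendsto' 0 0 (mul_zero _)).mono_left nhdsWithin_le_nhds
  have hka' : Tendsto (fun a => √E * a) (𝓝[>] 0) (𝓝[≠] 0) :=
    tendsto_nhdsWithin_iff.2 ⟨hka, by
      filter_upwards [self_mem_nhdsWithin] with a ha using (mul_pos hk ha).ne'⟩
  have hc := (Real.continuous_cos.tendsto' 0 1 Real.cos_zero).comp hka
  have hs := (Real.continuous_sinc.tendsto' 0 1 Real.sinc_zero).comp hka
  have hg := tendsto_sin_sub_mul_cos_div_cube.comp hka'
  have hcell := ((continuous_cellFactor E).tendsto (1, 1, 1 / 3, ![ξ, 0], ![η, 0])).comp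
    (hc.prodMk_nhds (hs.prodMk_nhds (hg.prodMk_nhds (hl.prodMk_nhds hyl))))
  have hprod := hcell.mul h
  simp only [cellFactor_limit, deltaB_mul_deltaB, ← neg_add, ← add_mul] at hprod
  refine hprod.congr' ?_
  filter_upwards [self_mem_nhdsWithin] with a ha
  simp only [Function.comp_apply]
  rw [relativeT_cons, inv_mul_freeT_mul_eq_cellFactor hE ha (det_chainT (det_zeroEnergyT a) _),
    chainT_cons_apply_zero]

lemma HasAmplitude.of_continuous {l : ℝ → List ℝ} {f g : ℝ → ℝ} {ξ : ℝ} (hf : Continuous f)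
    (hg : Continuous g) (hf0 : f 0 = ξ) (hg0 : g 0 = 0)
    (h : ∀ t > 0, t * chainT (zeroEnergyT (t ^ 2)) (l (t ^ 2)) 0 0 = f t ∧
      t * chainT (zeroEnergyT (t ^ 2)) (l (t ^ 2)) 0 1 = g t) : HasAmplitude l ξ := by
  have hcont : Continuous fun a => ![f √a, g √a] := by fun_prop
  refine ((hcont.tendsto' 0 _ (by simp [hf0, hg0])).mono_left nhdsWithin_le_nhds).congr' ?_
  filter_upwards [self_mem_nhdsWithin] with a (ha : 0 < a)
  obtain ⟨h₀, h₁⟩ := h √a (Real.sqrt_pos.2 ha)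
  rw [Real.sq_sqrt ha.le] at h₀ h₁
  ext j
  fin_cases j
  · exact h₀.symm
  · exact h₁.symm

lemma hasAmplitude_nil : HasAmplitude (fun _ => []) 0 :=
  .of_continuous (f := fun t => t) (g := fun _ => 0) continuous_id continuous_const rfl rfl
    fun t _ => by simp [chainT]

lemma y₁_sq {t : ℝ} (ht : 0 < t) : y₁ (t ^ 2) = 1 / t ^ 3 - 1 / t ^ 2 := by
  rw [y₁, ← Real.rpow_natCast_mul ht.le]
  norm_num [Real.rpow_neg ht.le]

lemma y₂_sq {t : ℝ} (ht : 0 < t) : y₂ (t ^ 2) = 1 / t - 1 / t ^ 2 := by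
  rw [y₂, ← Real.rpow_natCast_mul ht.le]
  norm_num [Real.rpow_neg ht.le]

lemma chainT_zeroEnergyT_cons {y z a p q r w p' q' r' w' : ℝ} {l : List ℝ} (hy : y = z)
    (hl : chainT (zeroEnergyT a) l = !![p, q; r, w]) (hp : p + a * r = p') (hq : q + a * w = q')
    (hr : z * p' + r = r') (hw : z * q' + w = w') :
    chainT (zeroEnergyT a) (y :: l) = !![p', q'; r', w'] := by
  subst hy hp hq hr hw
  rw [chainT, hl, zeroEnergyT, deltaB]
  simp only [mul_fin_two, EmbeddingLike.apply_eq_iff_eq, vecCons_inj, and_true]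
  refine ⟨⟨?_, ?_⟩, ?_, ?_⟩ <;> ring

section HalfChains

variable {t : ℝ}

lemma chainT_zeroEnergyT_y₁ (ht : 0 < t) :
    chainT (zeroEnergyT (t ^ 2)) [y₁ (t ^ 2)] =
      !![1, t ^ 2; 1 / t ^ 3 - 1 / t ^ 2, 1 / t] := by
  refine chainT_zeroEnergyT_cons (y₁_sq ht) one_fin_two ?_ ?_ ?_ ?_ <;> field

lemma chainT_zeroEnergyT_y₂_y₁ (ht : 0 < t) :
    chainT (zeroEnergyT (t ^ 2)) [y₂ (t ^ 2), y₁ (t ^ 2)] =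
      !![1 / t, t + t ^ 2; 0, t] := by
  refine chainT_zeroEnergyT_cons (y₂_sq ht) (chainT_zeroEnergyT_y₁ ht) ?_ ?_ ?_ ?_ <;> field

lemma chainT_zeroEnergyT_y₂_y₂_y₁ (ht : 0 < t) :
    chainT (zeroEnergyT (t ^ 2)) [y₂ (t ^ 2), y₂ (t ^ 2), y₁ (t ^ 2)] =
      !![1 / t, t + t ^ 2 + t ^ 3; 1 / t ^ 2 - 1 / t ^ 3, t ^ 2 + t - 1 / t] := by
  refine chainT_zeroEnergyT_cons (y₂_sq ht) (chainT_zeroEnergyT_y₂_y₁ ht) ?_ ?_ ?_ ?_ <;> field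

lemma chainT_zeroEnergyT_y₁_y₂_y₂_y₁ (ht : 0 < t) :
    chainT (zeroEnergyT (t ^ 2)) [y₁ (t ^ 2), y₂ (t ^ 2), y₂ (t ^ 2), y₁ (t ^ 2)] =
      zeroEnergyT (t ^ 2 * (1 + t) ^ 2) := by
  refine chainT_zeroEnergyT_cons (y₁_sq ht) (chainT_zeroEnergyT_y₂_y₂_y₁ ht) ?_ ?_ ?_ ?_ <;> field

lemma chainT_zeroEnergyT_y₂ (ht : 0 < t) :
    chainT (zeroEnergyT (t ^ 2)) [y₂ (t ^ 2)] =
      !![1, t ^ 2; 1 / t - 1 / t ^ 2, t] := by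
  refine chainT_zeroEnergyT_cons (y₂_sq ht) one_fin_two ?_ ?_ ?_ ?_ <;> field

lemma chainT_zeroEnergyT_y₁_y₂ (ht : 0 < t) :
    chainT (zeroEnergyT (t ^ 2)) [y₁ (t ^ 2), y₂ (t ^ 2)] =
      !![t, t ^ 2 + t ^ 3; 0, 1 / t] := by
  refine chainT_zeroEnergyT_cons (y₁_sq ht) (chainT_zeroEnergyT_y₂ ht) ?_ ?_ ?_ ?_ <;> field

lemma chainT_zeroEnergyT_y₁_y₁_y₂ (ht : 0 < t) :
    chainT (zeroEnergyT (t ^ 2)) [y₁ (t ^ 2), y₁ (t ^ 2), y₂ (t ^ 2)] =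
      !![t, t + t ^ 2 + t ^ 3; 1 / t ^ 2 - 1 / t, 1 / t ^ 2 + 1 / t - t] := by
  refine chainT_zeroEnergyT_cons (y₁_sq ht) (chainT_zeroEnergyT_y₁_y₂ ht) ?_ ?_ ?_ ?_ <;> field

lemma chainT_zeroEnergyT_y₂_y₁_y₁_y₂ (ht : 0 < t) :
    chainT (zeroEnergyT (t ^ 2)) [y₂ (t ^ 2), y₁ (t ^ 2), y₁ (t ^ 2), y₂ (t ^ 2)] =
      zeroEnergyT ((1 + t) ^ 2) := by
  refine chainT_zeroEnergyT_cons (y₂_sq ht) (chainT_zeroEnergyT_y₁_y₁_y₂ ht) ?_ ?_ ?_ ?_ <;> field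

end HalfChains

lemma HasAmplitude.of_eq_zeroEnergyT {l : ℝ → List ℝ} {d : ℝ → ℝ} (hd : Continuous d)
    (h : ∀ t > 0, chainT (zeroEnergyT (t ^ 2)) (l (t ^ 2)) = zeroEnergyT (d t)) :
    HasAmplitude l 0 :=
  .of_continuous (f := fun t => t) (g := fun t => t * d t) (by fun_prop) (by fun_prop) rfl
    (by simp) fun t ht => by
      rw [h t ht]
      simp [zeroEnergyT]

lemma tendsto_chainT_of_eq_zeroEnergyT {E : ℝ} {l : ℝ → List ℝ} {d : ℝ → ℝ}
    {R : Matrix (Fin 2) (Fin 2) ℝ} (hd : Continuous d)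
    (h : ∀ t > 0, chainT (zeroEnergyT (t ^ 2)) (l (t ^ 2)) = zeroEnergyT (d t))
    (hR : Tendsto (fun a => relativeT E a (l a)) (𝓝[>] 0) (𝓝 R)) :
    Tendsto (fun a => chainT (freeT E a) (l a)) (𝓝[>] 0) (𝓝 (zeroEnergyT (d 0) * R)) := by
  have hT : Tendsto (fun a => zeroEnergyT (d √a)) (𝓝[>] 0) (𝓝 (zeroEnergyT (d 0))) :=
    ((continuous_zeroEnergyT.comp (hd.comp Real.continuous_sqrt)).tendsto' 0 _
      (by simp)).mono_left nhdsWithin_le_nhds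
  refine (hT.mul hR).congr' ?_
  filter_upwards [self_mem_nhdsWithin] with a (ha : 0 < a)
  rw [← h √a (Real.sqrt_pos.2 ha), Real.sq_sqrt ha.le, chainT_mul_relativeT]

lemma tendsto_relativeT_nil (E : ℝ) :
    Tendsto (fun a => relativeT E a []) (𝓝[>] 0) (𝓝 (deltaB (-(0 * E)))) := by
  simp only [relativeT_nil, zero_mul, neg_zero, deltaB_zero]
  exact tendsto_const_nhds

lemma tendsto_chainT_freeT_y₁_y₂_y₂_y₁ {E : ℝ} (hE : 0 < E) :
    Tendsto (fun a => chainT (freeT E a) [y₁ a, y₂ a, y₂ a, y₁ a]) (𝓝[>] 0)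
      (𝓝 (deltaB (-(5 / 3 * E)))) := by
  have h₁ : HasAmplitude (fun a => [y₁ a]) 0 :=
    .of_continuous (f := fun t => t) (g := fun t => t ^ 3) (by fun_prop)
      (by fun_prop) (by simp) (by simp) fun t ht => by
        rw [chainT_zeroEnergyT_y₁ ht]
        constructor <;> simp only [of_apply, cons_val] <;> field
  have h₂ : HasAmplitude (fun a => [y₂ a, y₁ a]) 1 :=
    .of_continuous (f := fun _ => 1) (g := fun t => t ^ 2 + t ^ 3) (by fun_prop)
      (by fun_prop) (by simp) (by simp) fun t ht => by
        rw [chainT_zeroEnergyT_y₂_y₁ ht]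
        constructor <;> simp only [of_apply, cons_val] <;> field
  have h₃ : HasAmplitude (fun a => [y₂ a, y₂ a, y₁ a]) 1 :=
    .of_continuous (f := fun _ => 1) (g := fun t => t ^ 2 + t ^ 3 + t ^ 4) (by fun_prop)
      (by fun_prop) (by simp) (by simp) fun t ht => by
        rw [chainT_zeroEnergyT_y₂_y₂_y₁ ht]
        constructor <;> simp only [of_apply, cons_val] <;> field
  have hd : Continuous fun t : ℝ => t ^ 2 * (1 + t) ^ 2 := by fun_prop
  have h₄ := HasAmplitude.of_eq_zeroEnergyT (l := fun a => [y₁ a, y₂ a, y₂ a, y₁ a]) hd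
    fun t ht => chainT_zeroEnergyT_y₁_y₂_y₂_y₁ ht
  have hR := tendsto_relativeT_cons hE h₃ h₄ <| tendsto_relativeT_cons hE h₂ h₃ <|
    tendsto_relativeT_cons hE h₁ h₂ <| tendsto_relativeT_cons hE hasAmplitude_nil h₁ <|
    tendsto_relativeT_nil E
  convert tendsto_chainT_of_eq_zeroEnergyT hd (fun t ht => chainT_zeroEnergyT_y₁_y₂_y₂_y₁ ht)
    hR using 2
  norm_num [zeroEnergyT, ← one_fin_two]

lemma tendsto_chainT_freeT_y₂_y₁_y₁_y₂ {E : ℝ} (hE : 0 < E) :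
    Tendsto (fun a => chainT (freeT E a) [y₂ a, y₁ a, y₁ a, y₂ a]) (𝓝[>] 0)
      (𝓝 (zeroEnergyT 1)) := by
  have h₁ : HasAmplitude (fun a => [y₂ a]) 0 :=
    .of_continuous (f := fun t => t) (g := fun t => t ^ 3) (by fun_prop)
      (by fun_prop) (by simp) (by simp) fun t ht => by
        rw [chainT_zeroEnergyT_y₂ ht]
        constructor <;> simp only [of_apply, cons_val] <;> field
  have h₂ : HasAmplitude (fun a => [y₁ a, y₂ a]) 0 :=
    .of_continuous (f := fun t => t ^ 2) (g := fun t => t ^ 3 + t ^ 4) (by fun_prop)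
      (by fun_prop) (by simp) (by simp) fun t ht => by
        rw [chainT_zeroEnergyT_y₁_y₂ ht]
        constructor <;> simp only [of_apply, cons_val] <;> field
  have h₃ : HasAmplitude (fun a => [y₁ a, y₁ a, y₂ a]) 0 :=
    .of_continuous (f := fun t => t ^ 2) (g := fun t => t ^ 2 + t ^ 3 + t ^ 4) (by fun_prop)
      (by fun_prop) (by simp) (by simp) fun t ht => by
        rw [chainT_zeroEnergyT_y₁_y₁_y₂ ht]
        constructor <;> simp only [of_apply, cons_val] <;> field
  have hd : Continuous fun t : ℝ => (1 + t) ^ 2 := by fun_prop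
  have h₄ := HasAmplitude.of_eq_zeroEnergyT (l := fun a => [y₂ a, y₁ a, y₁ a, y₂ a]) hd
    fun t ht => chainT_zeroEnergyT_y₂_y₁_y₁_y₂ ht
  have hR := tendsto_relativeT_cons hE h₃ h₄ <| tendsto_relativeT_cons hE h₂ h₃ <|
    tendsto_relativeT_cons hE h₁ h₂ <| tendsto_relativeT_cons hE hasAmplitude_nil h₁ <|
    tendsto_relativeT_nil E
  convert tendsto_chainT_of_eq_zeroEnergyT hd (fun t ht => chainT_zeroEnergyT_y₂_y₁_y₁_y₂ ht)
    hR using 2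
  norm_num [deltaB_zero]

lemma Mfull_eq_chainT_mul_chainT (E a : ℝ) :
    Mfull E a = chainT (freeT E a) [y₂ a, y₁ a, y₁ a, y₂ a] *
      chainT (freeT E a) [y₁ a, y₂ a, y₂ a, y₁ a] := by
  simp only [Mfull, Mone, Mtwo, chainT, pow_two, mul_assoc, mul_one]

/-- entrywise, `M_a(E) → M(E) = [[1 - (5/3)E, 1], [-(5/3)E, 1]]`
as `a → 0⁺`. -/
theorem stmt11 (E : ℝ) (hE : 0 < E) :
    ∀ i j : Fin 2,
      Tendsto (fun a : ℝ => Mfull E a i j) (nhdsWithin 0 (Set.Ioi 0))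
        (nhds ((Matrix.of ![![1 - (5 / 3) * E, 1], ![-((5 / 3) * E), 1]]) i j)) := by
  have hM : Tendsto (Mfull E) (𝓝[>] 0) (𝓝 (zeroEnergyT 1 * deltaB (-(5 / 3 * E)))) := by
    simpa only [← Mfull_eq_chainT_mul_chainT] using
      (tendsto_chainT_freeT_y₂_y₁_y₁_y₂ hE).mul (tendsto_chainT_freeT_y₁_y₂_y₂_y₁ hE)
  have hlim : zeroEnergyT 1 * deltaB (-(5 / 3 * E)) =
      of ![![1 - (5 / 3) * E, 1], ![-((5 / 3) * E), 1]] := by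
    simp [zeroEnergyT, deltaB, sub_eq_add_neg]
  intro i j
  rw [← hlim]
  exact tendsto_pi_nhds.1 (tendsto_pi_nhds.1 hM i) j
end

section
/- Assume the random transfer-matrix setup below, with φ ∈ (0, π), φ ∉ {π/4, π/2, 3π/4}. Then for ν-almost every ω, the Prüfer radii R_n(ω) satisfy lim_{n→∞} ln R_n(ω) / (∑_{j=1}^n 1/j) = λ² / (8 sin²φ). -/
open MeasureTheory ProbabilityTheory Filter Matrix

/-!
In the eigenbasis of `M(φ)` the free step multiplies the Prüfer coordinate by `e^{iφ}`, and a
kick `g` shears it along the imaginary axis with strength `τ = g / (2 sin φ)`. With `z = e^{2iθ}`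
the doubled phase just before the kick, `ln R` grows by
`-τ Im z + (τ² / 2) Re (1 + z)² + O(|τ|³)`, and the cubic errors are summable. The linear term
and the centred quadratic term `(τ² - E τ²) Re (1 + z)²` are martingale differences whose
variances are `O(1/n)`, so by Kronecker's lemma their sums are `o(∑ 1/j)`. Finally `z` and `z²`
turn by the factors `e^{2iφ}` and `e^{4iφ}` at each step, up to small errors; neither factor is
`1`, so summation by parts shows that `2 z + z²` contributes a bounded amount to
`∑ E τ² · Re (1 + z)²`, and what remains is `(1/2) ∑ E τ²`.
-/

section Weights

open Finset

variable {w : ℕ → ℝ}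

theorem pos_of_antitone_of_tendsto_sum_atTop (hw : Antitone w)
    (hW : Tendsto (fun n => ∑ k ∈ range n, w k) atTop atTop) (n : ℕ) : 0 < w n := by
  by_contra! hn
  obtain ⟨m, hm, hgt⟩ :=
    ((eventually_ge_atTop n).and (hW.eventually_gt_atTop (∑ k ∈ range n, w k))).exists
  have htail : ∑ k ∈ Ico n m, w k ≤ 0 :=
    sum_nonpos fun k hk => (hw (mem_Ico.1 hk).1).trans hn
  linarith [sum_range_add_sum_Ico w hm]

theorem summable_div_sq_sum_range_succ (hw : ∀ n, 0 < w n) :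
    Summable fun n => w n / (∑ k ∈ range (n + 1), w k) ^ 2 := by
  set W : ℕ → ℝ := fun n => ∑ k ∈ range (n + 1), w k
  have hWpos : ∀ n, 0 < W n := fun n => sum_pos (fun k _ => hw k) nonempty_range_add_one
  have hterm : ∀ n, w (n + 1) / W (n + 1) ^ 2 ≤ 1 / W n - 1 / W (n + 1) := by
    intro n
    have hsucc : W (n + 1) = W n + w (n + 1) := sum_range_succ w (n + 1)
    have hlt : W n ≤ W (n + 1) := by linarith [hw (n + 1)]
    calc w (n + 1) / W (n + 1) ^ 2 ≤ w (n + 1) / (W n * W (n + 1)) := by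
          rw [sq]
          gcongr
          exacts [(hw _).le, mul_pos (hWpos n) (hWpos _), (hWpos _).le]
      _ = 1 / W n - 1 / W (n + 1) := by
          rw [div_sub_div _ _ (hWpos n).ne' (hWpos (n + 1)).ne', hsucc]
          ring
  refine (summable_nat_add_iff 1).1 (summable_of_sum_range_le (c := 1 / W 0)
    (fun n => div_nonneg (hw _).le (sq_nonneg _)) fun n => ?_)
  calc ∑ k ∈ range n, w (k + 1) / W (k + 1) ^ 2
      ≤ ∑ k ∈ range n, (1 / W k - 1 / W (k + 1)) := sum_le_sum fun k _ => hterm k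
    _ = 1 / W 0 - 1 / W n := sum_range_sub' (fun k => 1 / W k) n
    _ ≤ 1 / W 0 := sub_le_self _ (one_div_nonneg.2 (hWpos n).le)

theorem isLittleO_sum_range_of_isBigO_one {x : ℕ → ℝ} (hx : x =O[atTop] fun _ => (1 : ℝ))
    (hW : Tendsto (fun n => ∑ k ∈ range n, w k) atTop atTop) :
    x =o[atTop] fun n => ∑ k ∈ range n, w k :=
  hx.trans_isLittleO
    (Asymptotics.isLittleO_const_left.2 (Or.inr (tendsto_norm_atTop_atTop.comp hW)))

/- Summation by parts: with `T n` the partial sums of `x k / W (k + 1)` and `L` their limit,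
`∑ x k = (T n - L) W n - ∑ (T k - L) w k`, and both terms are `o(W)`. -/
theorem isLittleO_sum_of_tendsto_sum_div (hw : ∀ n, 0 < w n)
    (hW : Tendsto (fun n => ∑ k ∈ range n, w k) atTop atTop) {x : ℕ → ℝ} {L : ℝ}
    (hx : Tendsto (fun n => ∑ k ∈ range n, x k / ∑ j ∈ range (k + 1), w j) atTop (nhds L)) :
    (fun n => ∑ k ∈ range n, x k) =o[atTop] fun n => ∑ k ∈ range n, w k := by
  set W : ℕ → ℝ := fun n => ∑ k ∈ range n, w k
  set T : ℕ → ℝ := fun n => ∑ k ∈ range n, x k / W (k + 1)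
  have hparts : ∀ n, (T n - L) * W n - ∑ k ∈ range n, (T k - L) * w k = ∑ k ∈ range n, x k := by
    intro n
    induction n with
    | zero => simp [W]
    | succ n ih =>
      have hWsucc : W (n + 1) = W n + w n := sum_range_succ w n
      have hTsucc : T (n + 1) = T n + x n / W (n + 1) := sum_range_succ _ n
      have hxn : x n = (T (n + 1) - T n) * W (n + 1) := by
        have hpos : 0 < W (n + 1) := sum_pos (fun k _ => hw k) nonempty_range_add_one
        rw [hTsucc, add_sub_cancel_left, div_mul_cancel₀ _ hpos.ne']
      rw [sum_range_succ _ n, sum_range_succ x n, ← ih, hxn, hWsucc]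
      ring
  have hT : (fun n => T n - L) =o[atTop] fun _ => (1 : ℝ) :=
    (Asymptotics.isLittleO_one_iff ℝ).2 (by simpa using hx.sub_const L)
  have hfirst : (fun n => (T n - L) * W n) =o[atTop] W := by
    simpa using hT.mul_isBigO (Asymptotics.isBigO_refl W atTop)
  have hsecond : (fun n => ∑ k ∈ range n, (T k - L) * w k) =o[atTop] W := by
    have hterm : (fun k => (T k - L) * w k) =o[atTop] w := by
      simpa using hT.mul_isBigO (Asymptotics.isBigO_refl w atTop)
    exact hterm.sum_range (fun k => (hw k).le) hW
  exact (hfirst.sub hsecond).congr_left hparts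

/- Multiply by `1 - ζ` and split `z k - ζ z k = (z k - z (k + 1)) + (z (k + 1) - ζ z k)`: the first
part is summed by parts, the second is absolutely summable. -/
theorem exists_norm_sum_smul_le_of_antitone {𝕜 : Type*} [NormedField 𝕜] [NormedAlgebra ℝ 𝕜]
    {z : ℕ → 𝕜} {ζ : 𝕜} (hζ : ζ ≠ 1) {R : ℝ} (hz : ∀ n, ‖z n‖ ≤ R) (hw : Antitone w)
    (hw0 : ∀ n, 0 ≤ w n) (hsum : Summable fun n => w n * ‖z (n + 1) - ζ * z n‖) :
    ∃ c, ∀ n, ‖∑ k ∈ range n, w k • z k‖ ≤ c := by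
  have hparts : ∀ n, ∑ k ∈ range n, w k • (z k - z (k + 1))
      = w 0 • z 0 - w n • z n - ∑ k ∈ range n, (w k - w (k + 1)) • z (k + 1) := by
    intro n
    rw [eq_sub_iff_add_eq, ← sum_add_distrib, ← sum_range_sub' (fun k => w k • z k)]
    refine sum_congr rfl fun k _ => ?_
    module
  have hfirst : ∀ n, ‖∑ k ∈ range n, w k • (z k - z (k + 1))‖ ≤ 2 * w 0 * R := by
    intro n
    have hnorm : ∀ {c : ℝ} (_ : 0 ≤ c) k, ‖c • z k‖ ≤ c * R := fun {c} hc k => by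
      rw [norm_smul, Real.norm_of_nonneg hc]
      exact mul_le_mul_of_nonneg_left (hz k) hc
    have htail : ‖∑ k ∈ range n, (w k - w (k + 1)) • z (k + 1)‖ ≤ (w 0 - w n) * R := by
      rw [← sum_range_sub', sum_mul]
      exact norm_sum_le_of_le _ fun k _ => hnorm (sub_nonneg.2 (hw k.le_succ)) _
    rw [hparts]
    linarith [norm_sub_le (w 0 • z 0 - w n • z n) (∑ k ∈ range n, (w k - w (k + 1)) • z (k + 1)),
      norm_sub_le (w 0 • z 0) (w n • z n), hnorm (hw0 0) 0, hnorm (hw0 n) n]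
  have hsecond : ∀ n, ‖∑ k ∈ range n, w k • (z (k + 1) - ζ * z k)‖
      ≤ ∑' k, w k * ‖z (k + 1) - ζ * z k‖ := by
    intro n
    refine (norm_sum_le_of_le _ fun k _ => ?_).trans
      (hsum.sum_le_tsum (range n) fun k _ => mul_nonneg (hw0 k) (norm_nonneg _))
    rw [norm_smul, Real.norm_of_nonneg (hw0 k)]
  have hpos : 0 < ‖1 - ζ‖ := norm_pos_iff.2 (sub_ne_zero.2 hζ.symm)
  refine ⟨(2 * w 0 * R + ∑' k, w k * ‖z (k + 1) - ζ * z k‖) / ‖1 - ζ‖, fun n => ?_⟩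
  have hsplit : (1 - ζ) * ∑ k ∈ range n, w k • z k
      = ∑ k ∈ range n, w k • (z k - z (k + 1)) + ∑ k ∈ range n, w k • (z (k + 1) - ζ * z k) := by
    rw [← sum_add_distrib, mul_sum]
    refine sum_congr rfl fun k _ => ?_
    rw [mul_smul_comm, ← smul_add]
    congr 1
    ring
  rw [le_div_iff₀' hpos, ← norm_mul, hsplit]
  exact (norm_add_le _ _).trans (add_le_add (hfirst n) (hsecond n))

end Weights

section MartingaleDifferences

variable {Ω : Type*} {m0 : MeasurableSpace Ω} {ν : Measure Ω}

theorem integral_add_sq_of_condExp_eq_zero {m : MeasurableSpace Ω} (hm : m ≤ m0)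
    [SigmaFinite (ν.trim hm)] {X D : Ω → ℝ} (hX : StronglyMeasurable[m] X) (hX2 : MemLp X 2 ν)
    (hD2 : MemLp D 2 ν) (hDint : Integrable D ν) (hD : ν[D | m] =ᵐ[ν] 0) :
    ∫ ω, (X ω + D ω) ^ 2 ∂ν = ∫ ω, X ω ^ 2 ∂ν + ∫ ω, D ω ^ 2 ∂ν := by
  have hXD : Integrable (X * D) ν := hX2.integrable_mul hD2
  have horth : ∫ ω, X ω * D ω ∂ν = 0 := by
    have hcond : ν[X * D | m] =ᵐ[ν] 0 := by
      filter_upwards [condExp_mul_of_stronglyMeasurable_left hX hXD hDint, hD] with ω hω hDω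
      rw [hω, Pi.mul_apply, hDω, Pi.zero_apply, mul_zero]
    exact (integral_condExp hm).symm.trans ((integral_congr_ae hcond).trans (integral_zero' _ _))
  calc ∫ ω, (X ω + D ω) ^ 2 ∂ν
      = ∫ ω, (X ω ^ 2 + D ω ^ 2 + 2 * (X ω * D ω)) ∂ν := by
        refine integral_congr_ae (Eventually.of_forall fun ω => ?_)
        ring
    _ = ∫ ω, X ω ^ 2 ∂ν + ∫ ω, D ω ^ 2 ∂ν := by
        have hsq : Integrable (fun ω => X ω ^ 2 + D ω ^ 2) ν :=
          hX2.integrable_sq.add hD2.integrable_sq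
        have hcross : Integrable (fun ω => 2 * (X ω * D ω)) ν := hXD.const_mul 2
        rw [integral_add hsq hcross, integral_add hX2.integrable_sq hD2.integrable_sq,
          integral_const_mul, horth, mul_zero, add_zero]

/-- A square-integrable martingale difference sequence. The indexing is shifted by one: `D n` is
the increment from time `n` to time `n + 1`. -/
structure IsMartingaleDiff (F : Filtration ℕ m0) (D : ℕ → Ω → ℝ) (ν : Measure Ω) : Prop where
  measurable : ∀ n, Measurable[F (n + 1)] (D n)
  memLp : ∀ n, MemLp (D n) 2 ν
  condExp_eq_zero : ∀ n, ν[D n | F n] =ᵐ[ν] 0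

namespace IsMartingaleDiff

variable {F : Filtration ℕ m0} {D : ℕ → Ω → ℝ}

theorem measurable_sum (hD : IsMartingaleDiff F D ν) (n : ℕ) :
    Measurable[F n] fun ω => ∑ k ∈ Finset.range n, D k ω :=
  Finset.measurable_fun_sum _ fun k hk =>
    (hD.measurable k).mono (F.mono (Finset.mem_range.1 hk)) le_rfl

theorem memLp_sum (hD : IsMartingaleDiff F D ν) (n : ℕ) :
    MemLp (fun ω => ∑ k ∈ Finset.range n, D k ω) 2 ν :=
  memLp_finsetSum _ fun k _ => hD.memLp k

variable [IsFiniteMeasure ν]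

theorem mul_of_bounded (hD : IsMartingaleDiff F D ν) {h : ℕ → Ω → ℝ} {H : ℝ}
    (hh : ∀ n, Measurable[F n] (h n)) (hH : ∀ n ω, |h n ω| ≤ H) :
    IsMartingaleDiff F (fun n ω => h n ω * D n ω) ν := by
  have hint : ∀ n, MemLp (fun ω => h n ω * D n ω) 2 ν := fun n =>
    (hD.memLp n).of_le_mul
      (((hh n).mono (F.le n) le_rfl).aestronglyMeasurable.mul (hD.memLp n).aestronglyMeasurable)
      (Eventually.of_forall fun ω => by
        rw [norm_mul]
        exact mul_le_mul_of_nonneg_right (hH n ω) (norm_nonneg _))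
  refine ⟨fun n => ((hh n).mono (F.mono n.le_succ) le_rfl).mul (hD.measurable n), hint, fun n => ?_⟩
  filter_upwards [condExp_mul_of_stronglyMeasurable_left (hh n).stronglyMeasurable
    ((hint n).integrable one_le_two) ((hD.memLp n).integrable one_le_two),
    hD.condExp_eq_zero n] with ω hmul hzero
  exact hmul.trans (by rw [Pi.mul_apply, hzero, Pi.zero_apply, mul_zero])

theorem integral_eq_zero (hD : IsMartingaleDiff F D ν) (n : ℕ) : ∫ ω, D n ω ∂ν = 0 :=
  (integral_condExp (F.le n)).symm.trans
    ((integral_congr_ae (hD.condExp_eq_zero n)).trans (integral_zero' _ _))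

theorem martingale_sum (hD : IsMartingaleDiff F D ν) :
    Martingale (fun n ω => ∑ k ∈ Finset.range n, D k ω) F ν := by
  refine martingale_of_condExp_sub_eq_zero_nat
    (fun n => (hD.measurable_sum n).stronglyMeasurable)
    (fun n => (hD.memLp_sum n).integrable one_le_two) fun n => ?_
  have hincr : (fun ω => ∑ k ∈ Finset.range (n + 1), D k ω)
      - (fun ω => ∑ k ∈ Finset.range n, D k ω) = D n := by
    ext ω
    simp [Finset.sum_range_succ]
  rw [hincr]
  exact hD.condExp_eq_zero n

theorem integral_sq_sum (hD : IsMartingaleDiff F D ν) (n : ℕ) :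
    ∫ ω, (∑ k ∈ Finset.range n, D k ω) ^ 2 ∂ν = ∑ k ∈ Finset.range n, ∫ ω, D k ω ^ 2 ∂ν := by
  induction n with
  | zero => simp
  | succ n ih =>
    simp only [Finset.sum_range_succ]
    rw [integral_add_sq_of_condExp_eq_zero (F.le n) (hD.measurable_sum n).stronglyMeasurable
      (hD.memLp_sum n) (hD.memLp n) ((hD.memLp n).integrable one_le_two) (hD.condExp_eq_zero n), ih]

theorem ae_exists_tendsto_sum (hD : IsMartingaleDiff F D ν)
    (hsum : Summable fun n => ∫ ω, D n ω ^ 2 ∂ν) :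
    ∀ᵐ ω ∂ν, ∃ c, Tendsto (fun n => ∑ k ∈ Finset.range n, D k ω) atTop (nhds c) := by
  set X : ℕ → Ω → ℝ := fun n ω => ∑ k ∈ Finset.range n, D k ω
  have hXint : ∀ n, Integrable (X n) ν := fun n => (hD.memLp_sum n).integrable one_le_two
  have hL1 : ∀ n, ∫ ω, ‖X n ω‖ ∂ν ≤ ν.real Set.univ + ∑' k, ∫ ω, D k ω ^ 2 ∂ν := by
    intro n
    calc ∫ ω, ‖X n ω‖ ∂ν ≤ ∫ ω, (1 + X n ω ^ 2) ∂ν := by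
          refine integral_mono (hXint n).norm
            ((integrable_const 1).add (hD.memLp_sum n).integrable_sq) fun ω => ?_
          change |X n ω| ≤ 1 + X n ω ^ 2
          nlinarith [sq_abs (X n ω), sq_nonneg (|X n ω| - 1)]
      _ = ν.real Set.univ + ∑ k ∈ Finset.range n, ∫ ω, D k ω ^ 2 ∂ν := by
          rw [integral_add (integrable_const 1) (hD.memLp_sum n).integrable_sq, integral_const,
            smul_eq_mul, mul_one, hD.integral_sq_sum]
      _ ≤ ν.real Set.univ + ∑' k, ∫ ω, D k ω ^ 2 ∂ν := by
          gcongr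
          exact hsum.sum_le_tsum _ fun k _ => integral_nonneg fun ω => sq_nonneg _
  refine hD.martingale_sum.submartingale.exists_ae_tendsto_of_bdd
    (R := (ν.real Set.univ + ∑' k, ∫ ω, D k ω ^ 2 ∂ν).toNNReal) fun n => ?_
  rw [eLpNorm_one_eq_lintegral_enorm, ← ofReal_integral_norm_eq_lintegral_enorm (hXint n)]
  exact ENNReal.ofReal_le_ofReal (hL1 n)

theorem ae_isLittleO_sum (hD : IsMartingaleDiff F D ν) {w : ℕ → ℝ} (hw : ∀ n, 0 < w n)
    (hW : Tendsto (fun n => ∑ k ∈ Finset.range n, w k) atTop atTop) {c : ℝ}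
    (hvar : ∀ n, ∫ ω, D n ω ^ 2 ∂ν ≤ c * w n) :
    ∀ᵐ ω ∂ν, (fun n => ∑ k ∈ Finset.range n, D k ω) =o[atTop]
      fun n => ∑ k ∈ Finset.range n, w k := by
  set W : ℕ → ℝ := fun n => ∑ k ∈ Finset.range n, w k
  have hWpos : ∀ n, 0 < W (n + 1) := fun n =>
    Finset.sum_pos (fun k _ => hw k) Finset.nonempty_range_add_one
  have hDW : IsMartingaleDiff F (fun n ω => (W (n + 1))⁻¹ * D n ω) ν := by
    refine hD.mul_of_bounded (h := fun n _ => (W (n + 1))⁻¹) (H := (W 1)⁻¹)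
      (fun n => measurable_const) fun n _ => ?_
    rw [abs_of_pos (inv_pos.2 (hWpos n))]
    exact inv_anti₀ (hWpos 0) (Finset.sum_le_sum_of_subset_of_nonneg
      (Finset.range_mono (by omega)) fun k _ _ => (hw k).le)
  have hsum : Summable fun n => ∫ ω, ((W (n + 1))⁻¹ * D n ω) ^ 2 ∂ν := by
    refine Summable.of_nonneg_of_le (fun n => integral_nonneg fun ω => sq_nonneg _) (fun n => ?_)
      ((summable_div_sq_sum_range_succ hw).mul_left c)
    simp only [mul_pow, integral_const_mul]
    calc (W (n + 1))⁻¹ ^ 2 * ∫ ω, D n ω ^ 2 ∂ν ≤ (W (n + 1))⁻¹ ^ 2 * (c * w n) :=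
          mul_le_mul_of_nonneg_left (hvar n) (sq_nonneg _)
      _ = c * (w n / W (n + 1) ^ 2) := by
          rw [inv_pow]
          ring
  filter_upwards [hDW.ae_exists_tendsto_sum hsum] with ω ⟨L, hL⟩
  refine isLittleO_sum_of_tendsto_sum_div hw hW (L := L) (hL.congr fun n => ?_)
  exact Finset.sum_congr rfl fun k _ => inv_mul_eq_div _ _

theorem ae_isLittleO_sum_mul (hD : IsMartingaleDiff F D ν) {w : ℕ → ℝ} (hw : ∀ n, 0 < w n)
    (hW : Tendsto (fun n => ∑ k ∈ Finset.range n, w k) atTop atTop) {c : ℝ}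
    (hvar : ∀ n, ∫ ω, D n ω ^ 2 ∂ν ≤ c * w n) {h : ℕ → Ω → ℝ} {H : ℝ}
    (hh : ∀ n, Measurable[F n] (h n)) (hH : ∀ n ω, |h n ω| ≤ H) :
    ∀ᵐ ω ∂ν, (fun n => ∑ k ∈ Finset.range n, h k ω * D k ω) =o[atTop]
      fun n => ∑ k ∈ Finset.range n, w k := by
  refine (hD.mul_of_bounded hh hH).ae_isLittleO_sum hw hW (c := H ^ 2 * c) fun n => ?_
  calc ∫ ω, (h n ω * D n ω) ^ 2 ∂ν ≤ ∫ ω, H ^ 2 * D n ω ^ 2 ∂ν := by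
        refine integral_mono ((hD.mul_of_bounded hh hH).memLp n).integrable_sq
          ((hD.memLp n).integrable_sq.const_mul _) fun ω => ?_
        simp only [mul_pow]
        exact mul_le_mul_of_nonneg_right (sq_le_sq' (abs_le.1 (hH n ω)).1 (abs_le.1 (hH n ω)).2)
          (sq_nonneg _)
    _ ≤ H ^ 2 * c * w n := by
        rw [integral_const_mul, mul_assoc]
        exact mul_le_mul_of_nonneg_left (hvar n) (sq_nonneg _)

end IsMartingaleDiff

section Past

variable {E : Type*} [MeasurableSpace E]

/-- The past of a sequence of random variables: the σ-algebra at time `n` is generated by the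
`g j` with `j < n`, whereas `Filtration.natural` includes `g n` itself. -/
def pastFiltration (g : ℕ → Ω → E) (hg : ∀ n, Measurable (g n)) : Filtration ℕ m0 where
  seq n := ⨆ j ∈ Set.Iio n, MeasurableSpace.comap (g j) inferInstance
  mono' _ _ hmn := biSup_mono fun _ hj => hj.trans_le hmn
  le' _ := iSup₂_le fun j _ => (hg j).comap_le

variable {g : ℕ → Ω → E} (hg : ∀ n, Measurable (g n))

theorem measurable_pastFiltration_succ (n : ℕ) : Measurable[pastFiltration g hg (n + 1)] (g n) :=
  (comap_measurable (g n)).mono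
    (le_iSup₂_of_le (f := fun j (_ : j ∈ Set.Iio (n + 1)) =>
      MeasurableSpace.comap (g j) inferInstance) n n.lt_succ_self le_rfl) le_rfl

variable [IsFiniteMeasure ν]

theorem condExp_comp_pastFiltration (hindep : iIndepFun g ν) (n : ℕ) {f : E → ℝ}
    (hf : Measurable f) :
    ν[fun ω => f (g n ω) | pastFiltration g hg n] =ᵐ[ν] fun _ => ∫ ω, f (g n ω) ∂ν := by
  have hpast : Indep (MeasurableSpace.comap (g n) inferInstance) (pastFiltration g hg n) ν := by
    have h := indep_iSup_of_disjoint (fun k => (hg k).comap_le) hindep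
      (show Disjoint {n} (Set.Iio n) by simp)
    rwa [iSup_singleton] at h
  exact condExp_indep_eq (hg n).comap_le ((pastFiltration g hg).le n)
    (hf.comp (comap_measurable (g n))).stronglyMeasurable hpast

theorem isMartingaleDiff_comp (hindep : iIndepFun g ν) {f : ℕ → E → ℝ}
    (hf : ∀ n, Measurable (f n)) (hf2 : ∀ n, MemLp (fun ω => f n (g n ω)) 2 ν)
    (hmean : ∀ n, ∫ ω, f n (g n ω) ∂ν = 0) :
    IsMartingaleDiff (pastFiltration g hg) (fun n ω => f n (g n ω)) ν where
  measurable n := (hf n).comp (measurable_pastFiltration_succ hg n)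
  memLp := hf2
  condExp_eq_zero n := by
    filter_upwards [condExp_comp_pastFiltration hg hindep n (hf n)] with ω hω
    rw [hω, hmean, Pi.zero_apply]

end Past

end MartingaleDifferences

section PruferPaths

/-- The phase factor `e^{2iθ}` of `q = r e^{iθ}`, that is, twice the Prüfer angle read on the unit
circle. By the convention `x / 0 = 0` it vanishes at `q = 0`. -/
noncomputable def doubledPhase (q : ℂ) : ℂ := q / starRingEnd ℂ q

theorem norm_doubledPhase {q : ℂ} (hq : q ≠ 0) : ‖doubledPhase q‖ = 1 := by
  rw [doubledPhase, norm_div, Complex.norm_conj, div_self (norm_ne_zero_iff.2 hq)]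

theorem doubledPhase_mul (x y : ℂ) : doubledPhase (x * y) = doubledPhase x * doubledPhase y := by
  rw [doubledPhase, map_mul, mul_div_mul_comm, doubledPhase, doubledPhase]

theorem conj_doubledPhase (q : ℂ) : starRingEnd ℂ (doubledPhase q) = starRingEnd ℂ q / q := by
  rw [doubledPhase, map_div₀, Complex.conj_conj]

theorem measurable_doubledPhase : Measurable doubledPhase :=
  measurable_id.div Complex.continuous_conj.measurable

theorem norm_doubledPhase_sub_le {x y : ℂ} (hx : x ≠ 0) (hy : y ≠ 0) :
    ‖doubledPhase x - doubledPhase y‖ ≤ 2 * (‖x - y‖ / ‖y‖) := by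
  have hcross : x * starRingEnd ℂ y - starRingEnd ℂ x * y
      = starRingEnd ℂ x * (x - y) - x * starRingEnd ℂ (x - y) := by
    rw [map_sub]
    ring
  have hbound : ‖x * starRingEnd ℂ y - starRingEnd ℂ x * y‖ ≤ ‖x‖ * (2 * ‖x - y‖) := by
    rw [hcross]
    refine (norm_sub_le _ _).trans_eq ?_
    simp only [norm_mul, Complex.norm_conj]
    ring
  rw [doubledPhase, doubledPhase, div_sub_div _ _ ((map_ne_zero _).2 hx) ((map_ne_zero _).2 hy),
    norm_div, norm_mul, Complex.norm_conj, Complex.norm_conj, ← mul_div_assoc,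
    ← mul_div_mul_left (2 * ‖x - y‖) ‖y‖ (norm_ne_zero_iff.2 hx)]
  gcongr

theorem log_norm_mul_one_add {q w : ℂ} (hq : q ≠ 0) (hw : 1 + w ≠ 0) :
    Real.log ‖q * (1 + w)‖ - Real.log ‖q‖ = (Complex.log (1 + w)).re := by
  rw [norm_mul, Real.log_mul (norm_ne_zero_iff.2 hq) (norm_ne_zero_iff.2 hw), add_sub_cancel_left,
    Complex.log_re]

theorem abs_log_norm_sub_log_norm_le {x y : ℂ} (hx : x ≠ 0) (hy : y ≠ 0) {δ : ℝ}
    (hδ : δ ≤ 1 / 2) (h : ‖x - y‖ ≤ δ * ‖y‖) : |Real.log ‖x‖ - Real.log ‖y‖| ≤ 3 / 2 * δ := by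
  have hratio : ‖(x - y) / y‖ ≤ δ := by
    rwa [norm_div, div_le_iff₀ (norm_pos_iff.2 hy)]
  have hxy : x = y * (1 + (x - y) / y) := by
    field_simp
    ring
  have hne : 1 + (x - y) / y ≠ 0 := right_ne_zero_of_mul (hxy ▸ hx)
  calc |Real.log ‖x‖ - Real.log ‖y‖| = |(Complex.log (1 + (x - y) / y)).re| := by
        rw [← log_norm_mul_one_add hy hne, ← hxy]
    _ ≤ ‖Complex.log (1 + (x - y) / y)‖ := Complex.abs_re_le_norm _
    _ ≤ 3 / 2 * ‖(x - y) / y‖ := Complex.norm_log_one_add_half_le_self (hratio.trans hδ)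
    _ ≤ 3 / 2 * δ := by gcongr

theorem norm_log_one_add_sub_quadratic_le {w : ℂ} (hw : ‖w‖ ≤ 1 / 2) :
    ‖Complex.log (1 + w) - (w - w ^ 2 / 2)‖ ≤ ‖w‖ ^ 3 := by
  have htaylor : Complex.logTaylor 3 w = w - w ^ 2 / 2 := by
    simp only [Complex.logTaylor_succ, Complex.logTaylor_zero, Pi.add_apply]
    norm_num
    ring
  have hinv : (1 - ‖w‖)⁻¹ ≤ 2 := inv_le_of_inv_le₀ two_pos (by linarith)
  calc ‖Complex.log (1 + w) - (w - w ^ 2 / 2)‖ ≤ ‖w‖ ^ 3 * (1 - ‖w‖)⁻¹ / 3 := by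
        rw [← htaylor]
        exact_mod_cast Complex.norm_log_sub_logTaylor_le 2 (hw.trans_lt one_half_lt_one)
    _ ≤ ‖w‖ ^ 3 * 2 / 3 := by gcongr
    _ ≤ ‖w‖ ^ 3 := by linarith [pow_nonneg (norm_nonneg w) 3]

theorem abs_re_one_add_doubledPhase_sq_le {q : ℂ} (hq : q ≠ 0) :
    |((1 + doubledPhase q) ^ 2).re| ≤ 4 := by
  have hnorm : ‖1 + doubledPhase q‖ ≤ 2 := (norm_add_le _ _).trans_eq (by
    rw [norm_one, norm_doubledPhase hq, one_add_one_eq_two])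
  calc |((1 + doubledPhase q) ^ 2).re| ≤ ‖1 + doubledPhase q‖ ^ 2 :=
        (Complex.abs_re_le_norm _).trans_eq (norm_pow _ _)
    _ ≤ 2 ^ 2 := by gcongr
    _ = 4 := by norm_num

/-- The shear of the plane `ℂ = ℝ²` along the imaginary axis. It is the action of a random kick on
the Prüfer coordinate. -/
noncomputable def imShear (t : ℝ) (q : ℂ) : ℂ := q - t * (2 * q.re : ℝ) * Complex.I

theorem imShear_re (t : ℝ) (q : ℂ) : (imShear t q).re = q.re := by
  simp [imShear]

theorem imShear_im (t : ℝ) (q : ℂ) : (imShear t q).im = q.im - t * (2 * q.re) := by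
  simp [imShear]

theorem imShear_eq_mul (t : ℝ) {q : ℂ} (hq : q ≠ 0) :
    imShear t q = q * (1 + -t * Complex.I * (1 + starRingEnd ℂ (doubledPhase q))) := by
  rw [imShear, conj_doubledPhase, ← Complex.add_conj]
  field_simp
  ring

theorem norm_imShear_sub_le (t : ℝ) (q : ℂ) : ‖imShear t q - q‖ ≤ 2 * |t| * ‖q‖ := by
  rw [imShear, sub_sub_cancel_left, norm_neg, norm_mul, norm_mul, Complex.norm_I, mul_one,
    Complex.norm_real, Complex.norm_real, Real.norm_eq_abs, Real.norm_eq_abs, abs_mul, abs_two]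
  nlinarith [Complex.abs_re_le_norm q, abs_nonneg t]

theorem abs_log_norm_imShear_sub_le {t : ℝ} (ht : |t| ≤ 1 / 4) {q : ℂ} (hq : q ≠ 0) :
    |Real.log ‖imShear t q‖ - Real.log ‖q‖
      - (-(doubledPhase q).im * t + t ^ 2 * ((1 + doubledPhase q) ^ 2).re / 2)| ≤ 8 * |t| ^ 3 := by
  set z := doubledPhase q
  set w : ℂ := -t * Complex.I * (1 + starRingEnd ℂ z)
  have hw : ‖w‖ ≤ 2 * |t| := by
    have hz : ‖1 + starRingEnd ℂ z‖ ≤ 2 := (norm_add_le _ _).trans (by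
      rw [norm_one, Complex.norm_conj, norm_doubledPhase hq, one_add_one_eq_two])
    rw [norm_mul, norm_mul, norm_neg, Complex.norm_real, Complex.norm_I, mul_one, mul_comm 2]
    exact mul_le_mul_of_nonneg_left hz (abs_nonneg t)
  have hw2 : ‖w‖ ≤ 1 / 2 := by linarith
  have hne : 1 + w ≠ 0 := fun h => by
    have : w = -1 := by linear_combination h
    norm_num [this] at hw2
  have hre : (w - w ^ 2 / 2).re = -z.im * t + t ^ 2 * ((1 + z) ^ 2).re / 2 := by
    simp only [neg_mul, sq, mul_neg, neg_neg, Complex.sub_re, Complex.neg_re, Complex.mul_re,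
      Complex.ofReal_re, Complex.I_re, mul_zero, Complex.ofReal_im, Complex.I_im, mul_one, sub_self,
      Complex.add_re, Complex.one_re, Complex.conj_re, zero_mul, Complex.mul_im, add_zero,
      Complex.add_im, Complex.one_im, Complex.conj_im, zero_add, sub_neg_eq_add,
      Complex.div_ofNat_re, neg_zero, w]
    ring
  rw [imShear_eq_mul t hq, log_norm_mul_one_add hq hne, ← hre, ← Complex.sub_re]
  calc |(Complex.log (1 + w) - (w - w ^ 2 / 2)).re| ≤ ‖w‖ ^ 3 :=
        (Complex.abs_re_le_norm _).trans (norm_log_one_add_sub_quadratic_le hw2)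
    _ ≤ (2 * |t|) ^ 3 := by gcongr
    _ = 8 * |t| ^ 3 := by ring

/-- Prüfer coordinates `p n` of an orbit, together with the intermediate coordinates `q n` reached
after the `a n`-approximate rotation by `e` and before the kick of strength `τ n`. -/
structure IsPruferPath (e : ℂ) (a τ : ℕ → ℝ) (p q : ℕ → ℂ) : Prop where
  coord_ne_zero : ∀ n, p n ≠ 0
  rotated_ne_zero : ∀ n, q n ≠ 0
  norm_rotated_sub_le : ∀ n, ‖q n - e * p n‖ ≤ a n * ‖p n‖
  coord_succ : ∀ n, p (n + 1) = imShear (τ n) (q n)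

namespace IsPruferPath

open Finset

variable {e : ℂ} {a τ : ℕ → ℝ} {p q : ℕ → ℂ}

theorem summable_log_norm_increment_sub (h : IsPruferPath e a τ p q) (he : ‖e‖ = 1)
    (ha : Summable a) (hτ : Summable fun n => |τ n| ^ 3) :
    Summable fun n => Real.log ‖p (n + 1)‖ - Real.log ‖p n‖
      - (-(doubledPhase (q n)).im * τ n
        + τ n ^ 2 * ((1 + doubledPhase (q n)) ^ 2).re / 2) := by
  have hτ0 : ∀ᶠ n in atTop, |τ n| ≤ 1 / 4 := by
    filter_upwards [hτ.tendsto_atTop_zero.eventually_le_const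
      (show (0 : ℝ) < (1 / 4) ^ 3 by norm_num)] with n hn
    exact (pow_le_pow_iff_left₀ (abs_nonneg _) (by norm_num) three_ne_zero).1 hn
  refine Summable.of_norm_bounded_eventually_nat ((hτ.mul_left 8).add (ha.mul_left (3 / 2))) ?_
  filter_upwards [hτ0, ha.tendsto_atTop_zero.eventually_le_const one_half_pos] with n hτn han
  have he0 : e ≠ 0 := norm_ne_zero_iff.1 (he ▸ one_ne_zero)
  have hep : ‖e * p n‖ = ‖p n‖ := by rw [norm_mul, he, one_mul]
  have hrot := abs_log_norm_sub_log_norm_le (h.rotated_ne_zero n)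
    (mul_ne_zero he0 (h.coord_ne_zero n)) han (hep.symm ▸ h.norm_rotated_sub_le n)
  have hkick := abs_log_norm_imShear_sub_le hτn (h.rotated_ne_zero n)
  rw [hep] at hrot
  rw [h.coord_succ n, Real.norm_eq_abs]
  refine le_trans ?_ (add_le_add hkick hrot)
  rw [← sub_add_sub_cancel (Real.log ‖imShear (τ n) (q n)‖) (Real.log ‖q n‖), add_sub_right_comm]
  exact abs_add_le _ _

theorem norm_doubledPhase_succ_sub_le (h : IsPruferPath e a τ p q) (he : ‖e‖ = 1) (n : ℕ) :
    ‖doubledPhase (q (n + 1)) - doubledPhase e * doubledPhase (q n)‖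
      ≤ 2 * a (n + 1) + 4 * |τ n| := by
  have hp := h.coord_ne_zero (n + 1)
  have he0 : e ≠ 0 := norm_ne_zero_iff.1 (he ▸ one_ne_zero)
  have hrot : ‖doubledPhase (q (n + 1)) - doubledPhase e * doubledPhase (p (n + 1))‖
      ≤ 2 * a (n + 1) := by
    rw [← doubledPhase_mul]
    refine (norm_doubledPhase_sub_le (h.rotated_ne_zero _) (mul_ne_zero he0 hp)).trans ?_
    rw [norm_mul, he, one_mul]
    gcongr
    exact (div_le_iff₀ (norm_pos_iff.2 hp)).2 (h.norm_rotated_sub_le _)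
  have hkick : ‖doubledPhase (p (n + 1)) - doubledPhase (q n)‖ ≤ 4 * |τ n| := by
    refine (norm_doubledPhase_sub_le hp (h.rotated_ne_zero n)).trans ?_
    have hstep := norm_imShear_sub_le (τ n) (q n)
    rw [← h.coord_succ, ← div_le_iff₀ (norm_pos_iff.2 (h.rotated_ne_zero n))] at hstep
    linarith
  calc _ ≤ ‖doubledPhase (q (n + 1)) - doubledPhase e * doubledPhase (p (n + 1))‖
        + ‖doubledPhase e * (doubledPhase (p (n + 1)) - doubledPhase (q n))‖ := by
        rw [mul_sub]
        exact norm_sub_le_norm_sub_add_norm_sub _ _ _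
    _ ≤ 2 * a (n + 1) + 4 * |τ n| := by
        rw [norm_mul, norm_doubledPhase he0, one_mul]
        exact add_le_add hrot hkick

variable {w : ℕ → ℝ} {s : ℝ}

theorem summable_mul_norm_doubledPhase_succ_sub (h : IsPruferPath e a τ p q) (he : ‖e‖ = 1)
    (ha : Summable a) (hw : Antitone w) (hw0 : ∀ n, 0 ≤ w n)
    (hτw : Summable fun n => w n * |τ n|) :
    Summable fun n =>
      w n * ‖doubledPhase (q (n + 1)) - doubledPhase e * doubledPhase (q n)‖ := by
  refine Summable.of_nonneg_of_le (fun n => mul_nonneg (hw0 n) (norm_nonneg _)) (fun n => ?_)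
    ((((summable_nat_add_iff 1).2 ha).mul_left (2 * w 0)).add (hτw.mul_left 4))
  have ha0 : 0 ≤ a (n + 1) := nonneg_of_mul_nonneg_left
    ((norm_nonneg _).trans (h.norm_rotated_sub_le _)) (norm_pos_iff.2 (h.coord_ne_zero _))
  have hstep := mul_le_mul_of_nonneg_left (h.norm_doubledPhase_succ_sub_le he n) (hw0 n)
  have hwa := mul_le_mul_of_nonneg_right (hw n.zero_le) ha0
  linarith

/- Both `doubledPhase (q n)` and its square rotate by a fixed nontrivial factor up to a small error,
so their weighted sums stay bounded and only the constant term of `(1 + z) ^ 2` survives. -/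
theorem isBigO_sum_doubledPhase_sub (h : IsPruferPath e a τ p q) (he : ‖e‖ = 1)
    (hres : doubledPhase e ^ 2 ≠ 1) (ha : Summable a) (hw : Antitone w) (hw0 : ∀ n, 0 ≤ w n)
    (hτw : Summable fun n => w n * |τ n|) :
    (fun n => ∑ k ∈ range n, w k * (((1 + doubledPhase (q k)) ^ 2).re - 1)) =O[atTop]
      fun _ => (1 : ℝ) := by
  set z : ℕ → ℂ := fun n => doubledPhase (q n)
  set ζ := doubledPhase e
  have he0 : e ≠ 0 := norm_ne_zero_iff.1 (he ▸ one_ne_zero)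
  have hz : ∀ n, ‖z n‖ = 1 := fun n => norm_doubledPhase (h.rotated_ne_zero n)
  have hz2 : ∀ n, ‖z n ^ 2‖ ≤ 1 := fun n => by rw [norm_pow, hz, one_pow]
  have hdefect : Summable fun n => w n * ‖z (n + 1) - ζ * z n‖ :=
    h.summable_mul_norm_doubledPhase_succ_sub he ha hw hw0 hτw
  have hdefect2 : Summable fun n => w n * ‖z (n + 1) ^ 2 - ζ ^ 2 * z n ^ 2‖ := by
    refine Summable.of_nonneg_of_le (fun n => mul_nonneg (hw0 n) (norm_nonneg _)) (fun n => ?_)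
      (hdefect.mul_left 2)
    have hsum : ‖z (n + 1) + ζ * z n‖ ≤ 2 := (norm_add_le _ _).trans (by
      rw [norm_mul, hz, hz, norm_doubledPhase he0]
      norm_num)
    rw [← mul_pow, sq_sub_sq, norm_mul, mul_left_comm]
    exact mul_le_mul_of_nonneg_right hsum (mul_nonneg (hw0 n) (norm_nonneg _))
  obtain ⟨c₁, hc₁⟩ := exists_norm_sum_smul_le_of_antitone
    (fun hζ => hres (by rw [hζ, one_pow])) (fun n => (hz n).le) hw hw0 hdefect
  obtain ⟨c₂, hc₂⟩ := exists_norm_sum_smul_le_of_antitone hres hz2 hw hw0 hdefect2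
  refine Asymptotics.IsBigO.of_bound (2 * c₁ + c₂) (Eventually.of_forall fun n => ?_)
  have hsplit : ∑ k ∈ range n, w k * (((1 + z k) ^ 2).re - 1)
      = (2 * ∑ k ∈ range n, w k • z k + ∑ k ∈ range n, w k • z k ^ 2).re := by
    rw [mul_sum, ← sum_add_distrib, Complex.re_sum]
    refine sum_congr rfl fun k _ => ?_
    simp only [add_sq, one_pow, mul_one, Complex.add_re, Complex.one_re, Complex.mul_re,
      Complex.re_ofNat, Complex.im_ofNat, zero_mul, sub_zero, Complex.real_smul, Complex.ofReal_re,
      Complex.ofReal_im, Complex.mul_im, add_zero]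
    ring
  rw [hsplit, norm_one, mul_one, Real.norm_eq_abs]
  refine (Complex.abs_re_le_norm _).trans ((norm_add_le _ _).trans ?_)
  rw [norm_mul, Complex.norm_ofNat]
  linarith [hc₁ n, hc₂ n]

theorem tendsto_log_norm_div_sum (h : IsPruferPath e a τ p q) (he : ‖e‖ = 1)
    (hres : doubledPhase e ^ 2 ≠ 1) (ha : Summable a) (hτ : Summable fun n => |τ n| ^ 3)
    (hw : Antitone w) (hW : Tendsto (fun n => ∑ k ∈ range n, w k) atTop atTop)
    (hs : 0 ≤ s) (hτw : Summable fun n => s * w n * |τ n|)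
    (hlin : (fun n => ∑ k ∈ range n, (doubledPhase (q k)).im * τ k) =o[atTop]
      fun n => ∑ k ∈ range n, w k)
    (hquad : (fun n => ∑ k ∈ range n, ((1 + doubledPhase (q k)) ^ 2).re * (τ k ^ 2 - s * w k))
      =o[atTop] fun n => ∑ k ∈ range n, w k) :
    Tendsto (fun n => Real.log ‖p n‖ / ∑ k ∈ range n, w k) atTop (nhds (s / 2)) := by
  set W : ℕ → ℝ := fun n => ∑ k ∈ range n, w k
  set r : ℕ → ℝ := fun k => ((1 + doubledPhase (q k)) ^ 2).re
  set y : ℕ → ℝ := fun k => (doubledPhase (q k)).im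
  set err : ℕ → ℝ := fun n => Real.log ‖p (n + 1)‖ - Real.log ‖p n‖
    - (-y n * τ n + τ n ^ 2 * r n / 2)
  have hdecomp : ∀ n, Real.log ‖p n‖ - s / 2 * W n
      = Real.log ‖p 0‖ + ∑ k ∈ range n, err k - ∑ k ∈ range n, y k * τ k
        + (1 / 2) * ∑ k ∈ range n, r k * (τ k ^ 2 - s * w k)
        + (1 / 2) * ∑ k ∈ range n, s * w k * (r k - 1) := by
    intro n
    induction n with
    | zero => simp [W]
    | succ n ih =>
      simp only [W, err, sum_range_succ] at ih ⊢
      linear_combination ih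
  have hconst : (fun n => Real.log ‖p 0‖ + ∑ k ∈ range n, err k) =O[atTop] fun _ => (1 : ℝ) :=
    ((h.summable_log_norm_increment_sub he ha hτ).hasSum.tendsto_sum_nat.const_add _).isBigO_one ℝ
  have hphase : (fun n => ∑ k ∈ range n, s * w k * (r k - 1)) =O[atTop] fun _ => (1 : ℝ) :=
    h.isBigO_sum_doubledPhase_sub he hres ha (hw.const_mul hs)
      (fun n => mul_nonneg hs (pos_of_antitone_of_tendsto_sum_atTop hw hW n).le) hτw
  have hsub : (fun n => Real.log ‖p n‖ - s / 2 * W n) =o[atTop] W :=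
    ((((isLittleO_sum_range_of_isBigO_one hconst hW).sub hlin).add
      (hquad.const_mul_left (1 / 2))).add
      ((isLittleO_sum_range_of_isBigO_one hphase hW).const_mul_left (1 / 2))).congr_left
      fun n => (hdecomp n).symm
  have hlim := hsub.tendsto_div_nhds_zero.add_const (s / 2)
  rw [zero_add] at hlim
  refine hlim.congr' ?_
  filter_upwards [hW.eventually_gt_atTop 0] with n hn
  rw [sub_div, mul_div_cancel_right₀ _ hn.ne', sub_add_cancel]

end IsPruferPath

end PruferPaths

section RandomPruferPaths

variable {Ω : Type*} {m0 : MeasurableSpace Ω} {ν : Measure Ω} [IsProbabilityMeasure ν]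

theorem integral_sq_sub_integral_sq_sq_le {X : Ω → ℝ} (hX : AEMeasurable X ν) {H : ℝ}
    (hH : ∀ ω, |X ω| ≤ H) :
    ∫ ω, (X ω ^ 2 - ∫ ω', X ω' ^ 2 ∂ν) ^ 2 ∂ν ≤ H ^ 2 * ∫ ω, X ω ^ 2 ∂ν := by
  have hsq : ∀ ω, X ω ^ 2 ≤ H ^ 2 := fun ω => sq_le_sq' (abs_le.1 (hH ω)).1 (abs_le.1 (hH ω)).2
  have hint : Integrable (fun ω => X ω ^ 2) ν :=
    Integrable.of_bound (hX.pow_const 2).aestronglyMeasurable (H ^ 2)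
      (Eventually.of_forall fun ω => by
        rw [Real.norm_of_nonneg (sq_nonneg _)]
        exact hsq ω)
  calc ∫ ω, (X ω ^ 2 - ∫ ω', X ω' ^ 2 ∂ν) ^ 2 ∂ν = variance (fun ω => X ω ^ 2) ν :=
        (variance_eq_integral (hX.pow_const 2)).symm
    _ ≤ ∫ ω, (X ω ^ 2) ^ 2 ∂ν := variance_le_expectation_sq (hX.pow_const 2).aestronglyMeasurable
    _ ≤ ∫ ω, H ^ 2 * X ω ^ 2 ∂ν := by
        refine integral_mono_of_nonneg (Eventually.of_forall fun ω => sq_nonneg _)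
          (hint.const_mul _) (Eventually.of_forall fun ω => ?_)
        simp only [sq (X ω ^ 2)]
        exact mul_le_mul_of_nonneg_right (hsq ω) (sq_nonneg _)
    _ = H ^ 2 * ∫ ω, X ω ^ 2 ∂ν := integral_const_mul _ _

theorem integral_sq_le_sq_of_abs_le {X : Ω → ℝ} {H : ℝ} (hH : ∀ ω, |X ω| ≤ H) :
    ∫ ω, X ω ^ 2 ∂ν ≤ H ^ 2 := by
  refine (integral_mono_of_nonneg (Eventually.of_forall fun ω => sq_nonneg (X ω))
    (integrable_const (H ^ 2)) (Eventually.of_forall fun ω =>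
      sq_le_sq' (abs_le.1 (hH ω)).1 (abs_le.1 (hH ω)).2)).trans_eq ?_
  rw [integral_const, probReal_univ, one_smul]

theorem ae_tendsto_log_norm_div_sum_of_isPruferPath {F : Filtration ℕ m0} {w a b : ℕ → ℝ}
    {s : ℝ} {τ : ℕ → Ω → ℝ} (hτ : IsMartingaleDiff F τ ν)
    (hτ2 : IsMartingaleDiff F (fun n ω => τ n ω ^ 2 - s * w n) ν) (hw : Antitone w)
    (hW : Tendsto (fun n => ∑ k ∈ Finset.range n, w k) atTop atTop)
    (hτb : ∀ n ω, |τ n ω| ≤ b n) (hb : Summable fun n => b n ^ 3) (ha : Summable a) {e : ℂ}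
    (he : ‖e‖ = 1) (hres : doubledPhase e ^ 2 ≠ 1) {p q : ℕ → Ω → ℂ}
    (hq : ∀ n, Measurable[F n] (q n))
    (hpath : ∀ ω, IsPruferPath e a (τ · ω) (p · ω) (q · ω)) :
    ∀ᵐ ω ∂ν, Tendsto (fun n => Real.log ‖p n ω‖ / ∑ k ∈ Finset.range n, w k) atTop
      (nhds (s / 2)) := by
  have hw0 := pos_of_antitone_of_tendsto_sum_atTop hw hW
  obtain ⟨ω₀⟩ := ν.nonempty_of_neZero
  have hb0 : ∀ n, 0 ≤ b n := fun n => (abs_nonneg _).trans (hτb n ω₀)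
  have hsq : ∀ n, ∫ ω, τ n ω ^ 2 ∂ν = s * w n := fun n => by
    have h := hτ2.integral_eq_zero n
    rwa [integral_sub (hτ.memLp n).integrable_sq (integrable_const _), integral_const,
      probReal_univ, one_smul, sub_eq_zero] at h
  have hs : 0 ≤ s :=
    nonneg_of_mul_nonneg_left ((integral_nonneg fun ω => sq_nonneg _).trans_eq (hsq 0)) (hw0 0)
  have hsw : ∀ n, s * w n ≤ b n ^ 2 := fun n => hsq n ▸ integral_sq_le_sq_of_abs_le (hτb n)
  have hbH : ∀ n, b n ≤ 1 + ∑' k, b k ^ 3 := fun n => by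
    have hn := hb.le_tsum n fun k _ => pow_nonneg (hb0 k) 3
    nlinarith [mul_nonneg (hb0 n) (sq_nonneg (b n - 1)), sq_nonneg (b n - 1)]
  have hvar2 : ∀ n, ∫ ω, (τ n ω ^ 2 - s * w n) ^ 2 ∂ν ≤ (1 + ∑' k, b k ^ 3) ^ 2 * s * w n := by
    intro n
    have h := integral_sq_sub_integral_sq_sq_le (hτ.memLp n).aestronglyMeasurable.aemeasurable
      fun ω => (hτb n ω).trans (hbH n)
    rwa [hsq, ← mul_assoc] at h
  have hz : ∀ n, Measurable[F n] fun ω => doubledPhase (q n ω) := fun n =>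
    measurable_doubledPhase.comp (hq n)
  have hlin := hτ.ae_isLittleO_sum_mul hw0 hW (fun n => (hsq n).le)
    (fun n => Complex.measurable_im.comp (hz n)) fun n ω =>
      (Complex.abs_im_le_norm _).trans (norm_doubledPhase ((hpath ω).rotated_ne_zero n)).le
  have hquad := hτ2.ae_isLittleO_sum_mul hw0 hW hvar2
    (fun n => Complex.measurable_re.comp (((hz n).const_add 1).pow_const 2)) fun n ω =>
      abs_re_one_add_doubledPhase_sq_le ((hpath ω).rotated_ne_zero n)
  filter_upwards [hlin, hquad] with ω hlinω hquadω
  refine (hpath ω).tendsto_log_norm_div_sum he hres ha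
    (hb.of_nonneg_of_le (fun n => pow_nonneg (abs_nonneg _) 3)
      fun n => pow_le_pow_left₀ (abs_nonneg _) (hτb n ω) 3) hw hW hs ?_ hlinω hquadω
  refine hb.of_nonneg_of_le (fun n => mul_nonneg (mul_nonneg hs (hw0 n).le) (abs_nonneg _))
    fun n => ?_
  rw [pow_succ]
  exact mul_le_mul (hsw n) (hτb n ω) (abs_nonneg _) (sq_nonneg _)

theorem ae_tendsto_log_norm_div_sum_of_iIndepFun {g : ℕ → Ω → ℝ} (hg : ∀ n, Measurable (g n))
    (hindep : iIndepFun g ν) (hmean : ∀ n, ∫ ω, g n ω ∂ν = 0) {w a b : ℕ → ℝ} (hw : Antitone w)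
    (hW : Tendsto (fun n => ∑ k ∈ Finset.range n, w k) atTop atTop) {s : ℝ}
    (hvar : ∀ n, ∫ ω, g n ω ^ 2 ∂ν = s * w n) (hgb : ∀ n ω, |g n ω| ≤ b n)
    (hb : Summable fun n => b n ^ 3) (ha : Summable a) {e : ℂ} (he : ‖e‖ = 1)
    (hres : doubledPhase e ^ 2 ≠ 1) {c : ℝ} {p q : ℕ → Ω → ℂ}
    (hq : ∀ n, Measurable[pastFiltration g hg n] (q n))
    (hpath : ∀ ω, IsPruferPath e a (fun n => c * g n ω) (p · ω) (q · ω)) :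
    ∀ᵐ ω ∂ν, Tendsto (fun n => Real.log ‖p n ω‖ / ∑ k ∈ Finset.range n, w k) atTop
      (nhds (c ^ 2 * s / 2)) := by
  have hg2 : ∀ n, MemLp (g n) 2 ν := fun n =>
    MemLp.of_bound (hg n).aestronglyMeasurable (b n) (Eventually.of_forall (hgb n))
  have hsq2 : ∀ n, MemLp (fun ω => g n ω ^ 2) 2 ν := fun n =>
    MemLp.of_bound ((hg n).pow_const 2).aestronglyMeasurable (b n ^ 2)
      (Eventually.of_forall fun ω => by
        rw [norm_pow]
        exact pow_le_pow_left₀ (norm_nonneg _) (hgb n ω) 2)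
  have hlin : IsMartingaleDiff (pastFiltration g hg) (fun n ω => c * g n ω) ν :=
    isMartingaleDiff_comp hg hindep (fun _ => measurable_id.const_mul c)
      (fun n => (hg2 n).const_mul c) fun n => by rw [integral_const_mul, hmean, mul_zero]
  have hquad : IsMartingaleDiff (pastFiltration g hg)
      (fun n ω => (c * g n ω) ^ 2 - c ^ 2 * s * w n) ν := by
    refine isMartingaleDiff_comp hg hindep (f := fun n x => (c * x) ^ 2 - c ^ 2 * s * w n)
      (fun n => ((measurable_id.const_mul c).pow_const 2).sub_const _) (fun n => ?_) fun n => ?_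
    · simp only [mul_pow]
      exact ((hsq2 n).const_mul _).sub (memLp_const _)
    · simp only [mul_pow]
      rw [integral_sub ((hg2 n).integrable_sq.const_mul _) (integrable_const _),
        integral_const_mul, hvar, integral_const, probReal_univ, one_smul, mul_assoc, sub_self]
  have hcb : ∀ n ω, |c * g n ω| ≤ |c| * b n := fun n ω => by
    rw [abs_mul]
    exact mul_le_mul_of_nonneg_left (hgb n ω) (abs_nonneg c)
  exact ae_tendsto_log_norm_div_sum_of_isPruferPath hlin hquad hw hW hcb
    (by simpa only [mul_pow] using hb.mul_left (|c| ^ 3)) ha he hres hq hpath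

end RandomPruferPaths

section TransferMatrices

theorem norm_mulVec_le_of_abs_le {ι : Type*} [Fintype ι] [Nonempty ι] {A : Matrix ι ι ℝ} {δ : ℝ}
    (hA : ∀ i j, |A i j| ≤ δ) (v : ι → ℝ) : ‖A *ᵥ v‖ ≤ Fintype.card ι * δ * ‖v‖ := by
  refine (pi_norm_le_iff_of_nonempty _).2 fun i => ?_
  calc ‖(A *ᵥ v) i‖ ≤ ∑ j, ‖A i j * v j‖ := norm_sum_le _ _
    _ ≤ ∑ _j : ι, δ * ‖v‖ := Finset.sum_le_sum fun j _ => by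
        rw [norm_mul]
        exact mul_le_mul (hA i j) (norm_le_pi_norm v j) (norm_nonneg _)
          ((abs_nonneg _).trans (hA i j))
    _ = Fintype.card ι * δ * ‖v‖ := by
        rw [Finset.sum_const, Finset.card_univ, nsmul_eq_mul, mul_assoc]

theorem exists_norm_map_mulVec_le {ι E : Type*} [Fintype ι] [Nonempty ι] [NormedAddCommGroup E]
    [NormedSpace ℝ E] {P : (ι → ℝ) →ₗ[ℝ] E} (hP : Function.Injective P) :
    ∃ K, ∀ (A : Matrix ι ι ℝ) (δ : ℝ), (∀ i j, |A i j| ≤ δ) →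
      ∀ v, ‖P (A *ᵥ v)‖ ≤ K * δ * ‖P v‖ := by
  obtain ⟨c, -, hc⟩ := P.exists_antilipschitzWith (LinearMap.ker_eq_bot.2 hP)
  refine ⟨‖P.toContinuousLinearMap‖ * Fintype.card ι * c, fun A δ hA v => ?_⟩
  have hδ : 0 ≤ δ := (abs_nonneg _).trans (hA (Classical.arbitrary ι) (Classical.arbitrary ι))
  have hv : ‖v‖ ≤ c * ‖P v‖ := by simpa using hc.le_mul_norm_sub v 0
  calc ‖P (A *ᵥ v)‖ ≤ ‖P.toContinuousLinearMap‖ * ‖A *ᵥ v‖ :=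
        P.toContinuousLinearMap.le_opNorm _
    _ ≤ ‖P.toContinuousLinearMap‖ * (Fintype.card ι * δ * (c * ‖P v‖)) := by
        gcongr
        exact (norm_mulVec_le_of_abs_le hA v).trans (by gcongr)
    _ = ‖P.toContinuousLinearMap‖ * Fintype.card ι * c * δ * ‖P v‖ := by ring

/-- The unperturbed transfer matrix `M(φ)`. -/
noncomputable def freeTransferMatrix (φ : ℝ) : Matrix (Fin 2) (Fin 2) ℝ :=
  !![2 * Real.cos φ - 1, 1; 2 * Real.cos φ - 2, 1]

/-- The kick `B(g)`. -/
def kickMatrix (g : ℝ) : Matrix (Fin 2) (Fin 2) ℝ :=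
  !![1, 0; g, 1]

theorem freeTransferMatrix_mulVec (φ : ℝ) (v : Fin 2 → ℝ) :
    freeTransferMatrix φ *ᵥ v =
      ![(2 * Real.cos φ - 1) * v 0 + v 1, (2 * Real.cos φ - 2) * v 0 + v 1] := by
  ext i
  fin_cases i <;> simp [freeTransferMatrix, Matrix.mulVec, dotProduct]

theorem kickMatrix_mulVec (g : ℝ) (v : Fin 2 → ℝ) :
    kickMatrix g *ᵥ v = ![v 0, g * v 0 + v 1] := by
  ext i
  fin_cases i <;> simp [kickMatrix, Matrix.mulVec, dotProduct]

theorem continuous_kickMatrix : Continuous kickMatrix :=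
  continuous_matrix fun i j => by
    fin_cases i <;> fin_cases j <;> first | exact continuous_const | exact continuous_id

theorem isUnit_det_kickMatrix_mul {M : Matrix (Fin 2) (Fin 2) ℝ} (hM : IsUnit M.det) (g : ℝ) :
    IsUnit (kickMatrix g * M).det := by
  have hkick : (kickMatrix g).det = 1 := by simp [kickMatrix, Matrix.det_fin_two_of]
  rwa [Matrix.det_mul, hkick, one_mul]

/-- The coefficient `p` in the decomposition `v = p f₊ + conj p f₋` of a real vector in the complex
eigenbasis `f± = (1, 1 - e^{∓iφ})` of `M(φ)`; meaningful only for `sin φ ≠ 0`. -/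
noncomputable def pruferCoord (φ : ℝ) : (Fin 2 → ℝ) →ₗ[ℝ] ℂ where
  toFun v := ⟨v 0 / 2, (v 0 * (1 - Real.cos φ) - v 1) / (2 * Real.sin φ)⟩
  map_add' u v := by
    apply Complex.ext <;> simp only [Pi.add_apply, Complex.add_re, Complex.add_im] <;> ring
  map_smul' c v := by
    apply Complex.ext
    · simp only [Pi.smul_apply, smul_eq_mul, Real.ringHom_apply, Complex.real_smul, Complex.mul_re,
        Complex.ofReal_re, Complex.ofReal_im, zero_mul, sub_zero]
      ring
    · simp only [Pi.smul_apply, smul_eq_mul, Real.ringHom_apply, Complex.real_smul, Complex.mul_im,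
        Complex.ofReal_re, Complex.ofReal_im, zero_mul, add_zero]
      ring

variable {φ : ℝ}

theorem pruferCoord_apply_re (v : Fin 2 → ℝ) : (pruferCoord φ v).re = v 0 / 2 := rfl

theorem pruferCoord_apply_im (v : Fin 2 → ℝ) :
    (pruferCoord φ v).im = (v 0 * (1 - Real.cos φ) - v 1) / (2 * Real.sin φ) := rfl

theorem eq_pruferCoord (hφ : Real.sin φ ≠ 0) {v : Fin 2 → ℝ} {p : ℂ}
    (h0 : (v 0 : ℂ) = p + starRingEnd ℂ p)
    (h1 : (v 1 : ℂ) = p * (1 - Complex.exp (-(φ * Complex.I)))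
      + starRingEnd ℂ p * (1 - Complex.exp (φ * Complex.I))) :
    p = pruferCoord φ v := by
  have hv0 := congrArg Complex.re h0
  have hv1 := congrArg Complex.re h1
  rw [← neg_mul, ← Complex.ofReal_neg] at hv1
  simp only [Complex.add_re, Complex.mul_re, Complex.sub_re, Complex.sub_im, Complex.one_re,
    Complex.one_im, Complex.conj_re, Complex.conj_im, Complex.ofReal_re,
    Complex.exp_ofReal_mul_I_re, Complex.exp_ofReal_mul_I_im, Real.cos_neg, Real.sin_neg] at hv0 hv1
  apply Complex.ext
  · rw [pruferCoord_apply_re]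
    linarith
  · rw [pruferCoord_apply_im, hv0, hv1]
    field_simp
    ring

theorem pruferCoord_injective (hφ : Real.sin φ ≠ 0) : Function.Injective (pruferCoord φ) := by
  refine (injective_iff_map_eq_zero _).2 fun v hv => ?_
  have hre := congrArg Complex.re hv
  have him := congrArg Complex.im hv
  rw [pruferCoord_apply_re, Complex.zero_re] at hre
  have h0 : v 0 = 0 := by linarith
  rw [pruferCoord_apply_im, Complex.zero_im, h0, zero_mul, zero_sub, div_eq_zero_iff, neg_eq_zero]
    at him
  have h1 : v 1 = 0 := him.resolve_right (mul_ne_zero two_ne_zero hφ)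
  ext i
  fin_cases i
  exacts [h0, h1]

theorem pruferCoord_freeTransferMatrix_mulVec (hφ : Real.sin φ ≠ 0) (v : Fin 2 → ℝ) :
    pruferCoord φ (freeTransferMatrix φ *ᵥ v) = Complex.exp (φ * Complex.I) * pruferCoord φ v := by
  rw [freeTransferMatrix_mulVec]
  apply Complex.ext
  · rw [Complex.mul_re, Complex.exp_ofReal_mul_I_re, Complex.exp_ofReal_mul_I_im]
    simp only [pruferCoord_apply_re, pruferCoord_apply_im, cons_val_zero]
    field_simp
    ring
  · rw [Complex.mul_im, Complex.exp_ofReal_mul_I_re, Complex.exp_ofReal_mul_I_im]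
    simp only [pruferCoord_apply_re, pruferCoord_apply_im, cons_val_zero, cons_val_one]
    field_simp
    rw [Real.sin_sq]
    ring

theorem pruferCoord_kickMatrix_mulVec (g : ℝ) (v : Fin 2 → ℝ) :
    pruferCoord φ (kickMatrix g *ᵥ v) = imShear ((2 * Real.sin φ)⁻¹ * g) (pruferCoord φ v) := by
  rw [kickMatrix_mulVec]
  apply Complex.ext
  · rw [imShear_re]
    rfl
  · rw [imShear_im]
    simp only [pruferCoord_apply_re, pruferCoord_apply_im, cons_val_zero, cons_val_one]
    ring

theorem doubledPhase_exp_sq_ne_one (hφ : Real.sin (2 * φ) ≠ 0) :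
    doubledPhase (Complex.exp (φ * Complex.I)) ^ 2 ≠ 1 := by
  have hexp : doubledPhase (Complex.exp (φ * Complex.I)) ^ 2
      = Complex.exp ((2 * (2 * φ) : ℝ) * Complex.I) := by
    rw [doubledPhase, ← Complex.exp_conj, ← Complex.exp_sub, ← Complex.exp_nat_mul]
    congr 1
    simp only [Nat.cast_ofNat, map_mul, Complex.conj_ofReal, Complex.conj_I, mul_neg,
      sub_neg_eq_add, Complex.ofReal_mul, Complex.ofReal_ofNat]
    ring
  rw [hexp, Ne, Complex.exp_eq_one_iff]
  rintro ⟨n, hn⟩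
  refine hφ (Real.sin_eq_zero_iff.2 ⟨n, ?_⟩)
  have hcast : ((2 * (2 * φ) : ℝ) : ℂ) = ((2 * (n * Real.pi) : ℝ) : ℂ) := by
    refine mul_right_cancel₀ Complex.I_ne_zero (hn.trans ?_)
    push_cast
    ring
  linarith [Complex.ofReal_injective hcast]

theorem exists_isPruferPath_pruferCoord (hφ : Real.sin φ ≠ 0) {M : ℕ → Matrix (Fin 2) (Fin 2) ℝ}
    (hMinv : ∀ n, IsUnit (M n).det) {a : ℕ → ℝ}
    (hM : ∀ n i j, |M n i j - freeTransferMatrix φ i j| ≤ a n) :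
    ∃ K, ∀ (g : ℕ → ℝ) (v : ℕ → Fin 2 → ℝ), v 0 ≠ 0 →
      (∀ n, v (n + 1) = (kickMatrix (g n) * M n) *ᵥ v n) →
      IsPruferPath (Complex.exp (φ * Complex.I)) (fun n => K * a n)
        (fun n => (2 * Real.sin φ)⁻¹ * g n) (fun n => pruferCoord φ (v n))
        (fun n => pruferCoord φ (M n *ᵥ v n)) := by
  obtain ⟨K, hK⟩ := exists_norm_map_mulVec_le (pruferCoord_injective hφ)
  refine ⟨K, fun g v hv0 hv => ?_⟩
  have hcoord : ∀ {u}, u ≠ 0 → pruferCoord φ u ≠ 0 :=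
    fun hu => (map_ne_zero_iff _ (pruferCoord_injective hφ)).2 hu
  have hvne : ∀ n, v n ≠ 0 := by
    intro n
    induction n with
    | zero => exact hv0
    | succ n ih =>
      rw [hv]
      exact fun h => ih (Matrix.eq_zero_of_mulVec_eq_zero
        (isUnit_det_kickMatrix_mul (hMinv n) (g n)).ne_zero h)
  refine ⟨fun n => hcoord (hvne n), fun n => hcoord fun h =>
    hvne n (Matrix.eq_zero_of_mulVec_eq_zero (hMinv n).ne_zero h), fun n => ?_, fun n => ?_⟩
  · rw [← pruferCoord_freeTransferMatrix_mulVec hφ, ← map_sub, ← Matrix.sub_mulVec]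
    exact hK (M n - freeTransferMatrix φ) (a n) (hM n) (v n)
  · rw [hv, ← Matrix.mulVec_mulVec, pruferCoord_kickMatrix_mulVec]

end TransferMatrices

theorem measurable_of_adapted_recursion {Ω E V : Type*} {m0 : MeasurableSpace Ω}
    [MeasurableSpace E] [MeasurableSpace V] {F : Filtration ℕ m0} {g : ℕ → Ω → E}
    (hg : ∀ n, Measurable[F (n + 1)] (g n)) {v : ℕ → Ω → V} (hv0 : Measurable[F 0] (v 0))
    {f : ℕ → E × V → V} (hf : ∀ n, Measurable (f n))
    (hv : ∀ n ω, v (n + 1) ω = f n (g n ω, v n ω)) (n : ℕ) : Measurable[F n] (v n) := by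
  induction n with
  | zero => exact hv0
  | succ n ih =>
    rw [funext (hv n)]
    exact (hf n).comp ((hg n).prodMk (ih.mono (F.mono n.le_succ) le_rfl))

theorem summable_const_mul_rpow_pow_three (c : ℝ) {ε : ℝ} (hε : 0 < ε) :
    Summable fun n : ℕ => (c * ((n : ℝ) + 1) ^ (-(1 / 3 : ℝ) - ε)) ^ 3 := by
  have hpow : Summable fun n : ℕ => ((n + 1 : ℕ) : ℝ) ^ (-1 - 3 * ε) :=
    (summable_nat_add_iff 1).2 (Real.summable_nat_rpow.2 (by linarith))
  refine (hpow.mul_left (c ^ 3)).congr fun n => ?_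
  rw [mul_pow, ← Real.rpow_mul_natCast (by positivity)]
  push_cast
  ring_nf

theorem sin_two_mul_ne_zero {φ : ℝ} (hφ : φ ∈ Set.Ioo 0 Real.pi) (hφ2 : φ ≠ Real.pi / 2) :
    Real.sin (2 * φ) ≠ 0 := by
  have hcos : Real.cos φ ≠ 0 := fun h => hφ2 <| Real.injOn_cos (Set.Ioo_subset_Icc_self hφ)
    ⟨by positivity, half_le_self Real.pi_pos.le⟩ (h.trans Real.cos_pi_div_two.symm)
  rw [Real.sin_two_mul]
  exact mul_ne_zero (mul_ne_zero two_ne_zero (Real.sin_pos_of_mem_Ioo hφ).ne') hcos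

theorem stmt14_general {Ω : Type*} [MeasurableSpace Ω] (ν : Measure Ω) [IsProbabilityMeasure ν]
    {g : ℕ → Ω → ℝ} (hgmeas : ∀ n, Measurable (g n)) (hindep : iIndepFun g ν)
    (hmean : ∀ n, ∫ ω, g n ω ∂ν = 0) {w : ℕ → ℝ} (hw : Antitone w)
    (hW : Tendsto (fun n => ∑ j ∈ Finset.range n, w j) atTop atTop) {s : ℝ}
    (hvar : ∀ n, ∫ ω, g n ω ^ 2 ∂ν = s * w n) {b : ℕ → ℝ} (hbdd : ∀ n ω, |g n ω| ≤ b n)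
    (hb : Summable fun n => b n ^ 3) {φ : ℝ} (hφ : Real.sin (2 * φ) ≠ 0)
    {a : ℕ → ℝ} (ha : Summable a) {M : ℕ → Matrix (Fin 2) (Fin 2) ℝ}
    (hMinv : ∀ n, IsUnit (M n).det)
    (hM : ∀ n i j, |M n i j - freeTransferMatrix φ i j| ≤ a n)
    {v₀ : Fin 2 → ℝ} (hv₀ : v₀ ≠ 0) {v : ℕ → Ω → Fin 2 → ℝ} (hv0 : ∀ ω, v 0 ω = v₀)
    (hvrec : ∀ n ω, v (n + 1) ω = (kickMatrix (g n ω) * M n) *ᵥ v n ω)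
    {p : ℕ → Ω → ℂ}
    (hp : ∀ n ω, ((v n ω 0 : ℝ) : ℂ) = p n ω + starRingEnd ℂ (p n ω) ∧
      ((v n ω 1 : ℝ) : ℂ) = p n ω * (1 - Complex.exp (-(φ * Complex.I)))
        + starRingEnd ℂ (p n ω) * (1 - Complex.exp (φ * Complex.I))) :
    ∀ᵐ ω ∂ν, Tendsto (fun n => Real.log ‖p n ω‖ / ∑ j ∈ Finset.range n, w j) atTop
      (nhds (s / (8 * Real.sin φ ^ 2))) := by
  have hsin : Real.sin φ ≠ 0 := fun h => hφ (by rw [Real.sin_two_mul, h, mul_zero, zero_mul])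
  obtain ⟨K, hpath⟩ := exists_isPruferPath_pruferCoord hsin hMinv hM
  have hadapted : ∀ n, Measurable[pastFiltration g hgmeas n] (v n) :=
    measurable_of_adapted_recursion (measurable_pastFiltration_succ hgmeas)
      (funext hv0 ▸ measurable_const) (f := fun n x => (kickMatrix x.1 * M n) *ᵥ x.2)
      (fun n => (((continuous_kickMatrix.comp continuous_fst).matrix_mul
        continuous_const).matrix_mulVec continuous_snd).measurable) hvrec
  have hcoord : ∀ n, Measurable fun u => pruferCoord φ (M n *ᵥ u) := fun n =>
    ((pruferCoord φ).comp (M n).mulVecLin).continuous_of_finiteDimensional.measurable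
  have hmain := ae_tendsto_log_norm_div_sum_of_iIndepFun hgmeas hindep hmean hw hW hvar hbdd hb
    (ha.mul_left K) (Complex.norm_exp_ofReal_mul_I φ) (doubledPhase_exp_sq_ne_one hφ)
    (fun n => (hcoord n).comp (hadapted n))
    fun ω => hpath (g · ω) (v · ω) (hv0 ω ▸ hv₀) (hvrec · ω)
  have hlim : (2 * Real.sin φ)⁻¹ ^ 2 * s / 2 = s / (8 * Real.sin φ ^ 2) := by ring
  simpa only [hlim, ← eq_pruferCoord hsin (hp _ _).1 (hp _ _).2] using hmain

/-- random transfer-matrix setup, indices shifted so that `g n`, `M n`,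
`a n` stand for `g_{n+1}`, `M_{n+1}`, `a_{n+1}`: for `φ ∈ (0,π) \ {π/4, π/2, 3π/4}`,
`ν`-a.s. the Prüfer radii `R n ω = |p n ω|` of the orbit
`v (n+1) = B(g_{n+1}) M_{n+1} v n`, decomposed as `v n = p n • f₊ + conj (p n) • f₋`,
satisfy `ln R_n / (∑_{j=1}^n 1/j) → λ²/(8 sin²φ)`. -/
theorem stmt14
    {Ω : Type*} [MeasurableSpace Ω] (ν : Measure Ω) [IsProbabilityMeasure ν]
    (lam ε C₁ C₄ : ℝ) (hlam : 0 < lam) (hε : 0 < ε) (hC₁ : 0 < C₁) (hC₄ : 0 < C₄)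
    (g : ℕ → Ω → ℝ) (hgmeas : ∀ n, Measurable (g n))
    (hindep : iIndepFun g ν)
    (hmean : ∀ n, ∫ ω, g n ω ∂ν = 0)
    (hvar : ∀ n, ∫ ω, (g n ω) ^ 2 ∂ν = lam ^ 2 / ((n : ℝ) + 1))
    (hint4 : ∀ n, Integrable (fun ω => (g n ω) ^ 4) ν)
    (h4 : ∀ n, ∫ ω, (g n ω) ^ 4 ∂ν ≤ C₄ * lam ^ 4 / ((n : ℝ) + 1) ^ 2)
    (hbdd : ∀ n ω, |g n ω| ≤ C₁ * ((n : ℝ) + 1) ^ (-(1 / 3 : ℝ) - ε))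
    (φ : ℝ) (hφ : φ ∈ Set.Ioo 0 Real.pi)
    (hφ4 : φ ≠ Real.pi / 4) (hφ2 : φ ≠ Real.pi / 2) (hφ34 : φ ≠ 3 * Real.pi / 4)
    (a : ℕ → ℝ) (ha : ∀ n, 0 < a n) (hsum : Summable a)
    (C : ℝ) (hC : 0 < C)
    (M : ℕ → Matrix (Fin 2) (Fin 2) ℝ) (hMinv : ∀ n, IsUnit (M n).det)
    (hM : ∀ n, ∀ i j : Fin 2,
      |M n i j -
          (Matrix.of ![![2 * Real.cos φ - 1, 1], ![2 * Real.cos φ - 2, 1]]) i j|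
        ≤ C * a n)
    (v₀ : Fin 2 → ℝ) (hv₀ : v₀ ≠ 0)
    (v : ℕ → Ω → Fin 2 → ℝ)
    (hv0 : ∀ ω, v 0 ω = v₀)
    (hvrec : ∀ n ω,
      v (n + 1) ω = ((Matrix.of ![![1, 0], ![g n ω, 1]]) * M n).mulVec (v n ω))
    (p : ℕ → Ω → ℂ)
    (hp : ∀ n ω,
      ((v n ω 0 : ℝ) : ℂ) = p n ω + starRingEnd ℂ (p n ω) ∧
      ((v n ω 1 : ℝ) : ℂ) =
        p n ω * (1 - Complex.exp (-(φ * Complex.I))) +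
          starRingEnd ℂ (p n ω) * (1 - Complex.exp (φ * Complex.I))) :
    ∀ᵐ ω ∂ν,
      Tendsto
        (fun n =>
          Real.log ‖p n ω‖ / (∑ j ∈ Finset.range n, 1 / ((j : ℝ) + 1)))
        atTop (nhds (lam ^ 2 / (8 * (Real.sin φ) ^ 2))) := by
  exact stmt14_general ν hgmeas hindep hmean (w := fun n => 1 / ((n : ℝ) + 1))
    (fun _ _ hmn => Nat.one_div_le_one_div hmn) Real.tendsto_sum_range_one_div_nat_succ_atTop
    (fun n => by rw [hvar, mul_one_div]) hbdd (summable_const_mul_rpow_pow_three C₁ hε)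
    (sin_two_mul_ne_zero hφ hφ2) (hsum.mul_left C) hMinv hM hv₀ hv0 hvrec hp
end
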